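/- arXiv:1501.01274 — 2 statements merged into one kernel-verified Lean document; each statement's English description precedes it below -/
import Mathlib

section
/- Let n ≥ 1 and let K ∈ C¹(ℝ^{n+1}∖{0}) be odd (K(−z) = −K(z)) and homogeneous of degree −n (K(λz) = λ^{−n}K(z) for all λ > 0 and z ≠ 0). Then for every n-dimensional affine subspace L ⊂ ℝ^{n+1}, every x ∈ ℝ^{n+1}∖L, and every j ∈ {1,…,n+1}, the integral ∫_L (∂_j K)(x−y) dℋⁿ(y) converges absolutely and equals 0. -/
open MeasureTheory Metric Set
open scoped ENNReal NNReal

noncomputable section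

abbrev Euc (d : ℕ) := EuclideanSpace ℝ (Fin d)

/-- The closed support of a Borel measure on `ℝ^d`. -/
def msupport {d : ℕ} (μ : Measure (Euc d)) : Set (Euc d) :=
  {x | ∀ r > 0, 0 < μ (Metric.ball x r)}

/-- `L` is an `n`-dimensional affine subspace (an `n`-plane) of `ℝ^d`. -/
def IsNPlane {d : ℕ} (n : ℕ) (L : Set (Euc d)) : Prop :=
  ∃ W : AffineSubspace ℝ (Euc d), (W : Set (Euc d)) = L ∧ Module.finrank ℝ W.direction = n

/-- `μ` is `n`-Ahlfors–David regular with constant `A` and (unbounded) support `E`. -/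
def IsADRWith {d : ℕ} (n : ℕ) (A : ℝ) (μ : Measure (Euc d)) (E : Set (Euc d)) : Prop :=
  1 ≤ A ∧ msupport μ = E ∧ ¬ Bornology.IsBounded E ∧
    ∀ x ∈ E, ∀ r : ℝ, 0 < r →
      ENNReal.ofReal (A⁻¹ * r ^ n) ≤ μ (closedBall x r) ∧
      μ (closedBall x r) ≤ ENNReal.ofReal (A * r ^ n)

/-- `μ` is `n`-uniformly rectifiable: `n`-ADR plus big pieces of Lipschitz images
(with BPLI constants `θ`, `M`). -/
def IsURWith {d : ℕ} (n : ℕ) (A θ M : ℝ) (μ : Measure (Euc d)) (E : Set (Euc d)) : Prop :=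
  IsADRWith n A μ E ∧ 0 < θ ∧ 0 < M ∧
    ∀ x ∈ E, ∀ r : ℝ, 0 < r →
      ∃ g : EuclideanSpace ℝ (Fin n) → Euc d, LipschitzWith (Real.toNNReal M) g ∧
        ENNReal.ofReal (θ * r ^ n) ≤ μ (closedBall x r ∩ g '' (closedBall 0 r))

/-- `S` belongs to the kernel class `K_{n+β}(ℝ^d)` with constant `A`:
size bound `|S(x,y)| ≤ A|x-y|^{-(n+β)}` and Lipschitz-in-`y` bound
`|S(x,y) - S(x,y')| ≤ A|y-y'| |x-y|^{-(n+β+1)}` for `|y-y'| ≤ |x-y|/2`. -/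
def IsCZKernel {d : ℕ} (n : ℕ) (β A : ℝ) (S : Euc d → Euc d → ℝ) : Prop :=
  (∀ x y : Euc d, x ≠ y → |S x y| ≤ A / dist x y ^ ((n : ℝ) + β)) ∧
  (∀ x y y' : Euc d, x ≠ y → dist y y' ≤ dist x y / 2 →
    |S x y - S x y'| ≤ A * dist y y' / dist x y ^ ((n : ℝ) + β + 1))

/-!
Write `V` for the direction of the plane, `n` for its dimension and `v ∉ V` for a vector from the
plane to `x`, so that the integral becomes `∫_V ∂_w K (p + v) dp`. For `t > 0` the integral
`∫_V (K (p + t v) + K (-p + t v)) dp` converges, since oddness turns the sum into a difference of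
`K` at two points at distance `2 t ‖v‖`, and by homogeneity the dilation `p ↦ t p` shows that it
does not depend on `t`. Its derivative at `t = 1` is `2 ∫_V ∂_v K (p + v) dp`, which therefore
vanishes. The same holds for `v + u` with `u ∈ V`, which defines the same translate of `V`, so
linearity in the direction of differentiation gives the claim for every `w` in the span of `V`
and `v`.
-/

section PosHomogeneous

variable {E F : Type*} [NormedAddCommGroup E] [NormedSpace ℝ E] [NormedAddCommGroup F]
  [NormedSpace ℝ F] {a : ℝ} {f : E → F}

/-- Positive homogeneity of degree `a` away from the origin. Nothing is required of `f 0`, since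
the functions of interest are singular there. -/
def IsPosHomogeneous (a : ℝ) (f : E → F) : Prop :=
  ∀ l : ℝ, 0 < l → ∀ z : E, z ≠ 0 → f (l • z) = l ^ a • f z

theorem IsPosHomogeneous.fderiv (hf : IsPosHomogeneous a f) :
    IsPosHomogeneous (a - 1) (fderiv ℝ f) := by
  intro l hl z hz
  have hscale : (fun y => f (l • y)) =ᶠ[nhds z] l ^ a • f := by
    filter_upwards [isOpen_compl_singleton.mem_nhds hz] with y hy using hf l hl y hy
  have hderiv : l • _root_.fderiv ℝ f (l • z) = l ^ a • _root_.fderiv ℝ f z := by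
    rw [← fderiv_comp_smul, hscale.fderiv_eq, fderiv_const_smul_field, Pi.smul_apply]
  rw [Real.rpow_sub_one hl.ne', div_eq_inv_mul, mul_smul, ← hderiv, inv_smul_smul₀ hl.ne']

theorem IsPosHomogeneous.fderiv_apply (hf : IsPosHomogeneous a f) (w : E) :
    IsPosHomogeneous (a - 1) fun z => _root_.fderiv ℝ f z w := fun l hl z hz =>
  DFunLike.congr_fun (hf.fderiv l hl z hz) w

theorem IsPosHomogeneous.exists_norm_le_rpow [FiniteDimensional ℝ E] (hf : IsPosHomogeneous a f)
    (hc : ContinuousOn f {0}ᶜ) : ∃ C, 0 ≤ C ∧ ∀ z : E, z ≠ 0 → ‖f z‖ ≤ C * ‖z‖ ^ a := by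
  obtain ⟨C, hC⟩ := (isCompact_sphere (0 : E) 1).exists_bound_of_continuousOn
    (hc.mono fun z hz => ne_zero_of_mem_unit_sphere ⟨z, hz⟩)
  refine ⟨max C 0, le_max_right _ _, fun z hz => ?_⟩
  have hz' : 0 < ‖z‖ := norm_pos_iff.2 hz
  have hunit : ‖‖z‖⁻¹ • z‖ = 1 := norm_smul_inv_norm (𝕜 := ℝ) hz
  calc ‖f z‖ = ‖f (‖z‖ • ‖z‖⁻¹ • z)‖ := by rw [smul_inv_smul₀ hz'.ne']
    _ = ‖z‖ ^ a * ‖f (‖z‖⁻¹ • z)‖ := by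
      rw [hf _ hz' _ (smul_ne_zero (inv_ne_zero hz'.ne') hz), norm_smul,
        Real.norm_of_nonneg (by positivity)]
    _ ≤ ‖z‖ ^ a * max C 0 := by
      gcongr
      exact (hC _ (mem_sphere_zero_iff_norm.2 hunit)).trans (le_max_left _ _)
    _ = max C 0 * ‖z‖ ^ a := mul_comm _ _

end PosHomogeneous

section Module

variable {k M : Type*} [DivisionRing k] [AddCommGroup M] [Module k M] {V : Submodule k M} {v : M}

theorem coe_add_smul_ne_zero (hv : v ∉ V) {p : V} {t : k} (h : p ≠ 0 ∨ t ≠ 0) :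
    (p : M) + t • v ≠ 0 := by
  intro hsum
  have htv : t • v ∈ V := by
    rw [eq_neg_of_add_eq_zero_right hsum]
    exact V.neg_mem p.2
  have ht : t = 0 := by
    by_contra ht
    exact hv ((V.smul_mem_iff ht).1 htv)
  simp_all

theorem coe_add_ne_zero (hv : v ∉ V) (p : V) : (p : M) + v ≠ 0 := by
  simpa using coe_add_smul_ne_zero (p := p) hv (.inr (one_ne_zero (α := k)))

end Module

section Transversal

variable {E F : Type*} [NormedAddCommGroup E] [NormedSpace ℝ E] [NormedAddCommGroup F]
  {K : E → F} {V : Submodule ℝ E} {v : E}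

theorem continuous_comp_coe_add (hc : ContinuousOn K {0}ᶜ) (hv : v ∉ V) :
    Continuous fun p : V => K (p + v) :=
  hc.comp_continuous (by fun_prop) (coe_add_ne_zero hv)

/-- Twice the even part of the restriction of `K` to the translate `v + V`. For odd `K` the leading
terms at infinity cancel, so it decays one order faster than `K` itself. -/
def evenTrace (K : E → F) (V : Submodule ℝ E) (v : E) (p : V) : F :=
  K (p + v) + K (-p + v)

theorem continuous_evenTrace (hK : ContinuousOn K {0}ᶜ) (hv : v ∉ V) :
    Continuous (evenTrace K V v) :=
  (continuous_comp_coe_add hK hv).add ((continuous_comp_coe_add hK hv).comp continuous_neg)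

variable [NormedSpace ℝ F] {a : ℝ}

theorem hasDerivAt_comp_add_smul {z : E} {t : ℝ} (hK : DifferentiableAt ℝ K (z + t • v)) :
    HasDerivAt (fun s : ℝ => K (z + s • v)) (fderiv ℝ K (z + t • v) v) t := by
  have hline : HasDerivAt (fun s : ℝ => z + s • v) v t := by
    simpa using ((hasDerivAt_id t).smul_const v).const_add z
  exact hK.hasFDerivAt.comp_hasDerivAt t hline

theorem hasDerivAt_evenTrace_smul (hK : DifferentiableOn ℝ K {0}ᶜ) (hv : v ∉ V) {t : ℝ}
    (ht : t ≠ 0) (p : V) :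
    HasDerivAt (fun s : ℝ => evenTrace K V (s • v) p)
      (evenTrace (fun z => fderiv ℝ K z v) V (t • v) p) t := by
  have hderiv : ∀ q : V, HasDerivAt (fun s : ℝ => K (q + s • v)) (fderiv ℝ K (q + t • v) v) t :=
    fun q => hasDerivAt_comp_add_smul <| hK.differentiableAt <|
      isOpen_compl_singleton.mem_nhds (coe_add_smul_ne_zero hv (.inr ht))
  exact (hderiv p).add (hderiv (-p))

theorem evenTrace_smul_smul (hhom : IsPosHomogeneous a K) (hv : v ∉ V) {t : ℝ} (ht : 0 < t)
    (p : V) : evenTrace K V (t • v) (t • p) = t ^ a • evenTrace K V v p := by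
  have hneg : -(p : E) + v ≠ 0 := coe_add_ne_zero hv (-p)
  rw [evenTrace, evenTrace, smul_add, ← hhom t ht _ (coe_add_ne_zero hv p), ← hhom t ht _ hneg]
  simp only [Submodule.coe_smul, smul_add, smul_neg]

variable [FiniteDimensional ℝ V]

theorem IsPosHomogeneous.exists_norm_coe_add_smul_le {f : E → F} (hf : IsPosHomogeneous a f)
    (hc : ContinuousOn f {0}ᶜ) (ha : a ≤ 0) (hv : v ∉ V) {ε : ℝ} (hε : 0 < ε) :
    ∃ C, ∀ (p : V) (t : ℝ), ε ≤ max ‖p‖ |t| → ‖f (p + t • v)‖ ≤ C * (1 + ‖p‖) ^ a := by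
  have hne : ∀ q : V × ℝ, q ≠ 0 → (q.1 : E) + q.2 • v ≠ 0 := fun q hq =>
    coe_add_smul_ne_zero hv (by contrapose! hq; exact Prod.ext hq.1 hq.2)
  have hhom : IsPosHomogeneous a fun q : V × ℝ => f (q.1 + q.2 • v) := by
    intro l hl q hq
    rw [← hf l hl _ (hne q hq)]
    simp only [Prod.smul_fst, Prod.smul_snd, Submodule.coe_smul, smul_add, smul_eq_mul, mul_smul]
  have hcont : ContinuousOn (fun q : V × ℝ => f (q.1 + q.2 • v)) {0}ᶜ :=
    hc.comp (by fun_prop) hne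
  obtain ⟨C, hC0, hC⟩ := hhom.exists_norm_le_rpow hcont
  refine ⟨C * (ε⁻¹ + 1)⁻¹ ^ a, fun p t hpt => ?_⟩
  have hnorm : ‖(p, t)‖ = max ‖p‖ |t| := rfl
  have hpos : 0 < ‖(p, t)‖ := hnorm ▸ hε.trans_le hpt
  have hlower : (ε⁻¹ + 1)⁻¹ * (1 + ‖p‖) ≤ ‖(p, t)‖ := by
    have hone : 1 ≤ ε⁻¹ * ‖(p, t)‖ := by rwa [hnorm, le_inv_mul_iff₀ hε, mul_one]
    rw [inv_mul_le_iff₀ (by positivity), add_mul, one_mul]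
    exact add_le_add hone (hnorm ▸ le_max_left _ _)
  calc ‖f (p + t • v)‖ ≤ C * ‖(p, t)‖ ^ a := hC (p, t) (norm_pos_iff.1 hpos)
    _ ≤ C * ((ε⁻¹ + 1)⁻¹ * (1 + ‖p‖)) ^ a := by
      gcongr ?_ * ?_
      exact Real.rpow_le_rpow_of_nonpos (by positivity) hlower ha
    _ = C * (ε⁻¹ + 1)⁻¹ ^ a * (1 + ‖p‖) ^ a := by
      rw [Real.mul_rpow (by positivity) (by positivity), mul_assoc]

theorem IsPosHomogeneous.exists_norm_evenTrace_smul_le {f : E → F} (hf : IsPosHomogeneous a f)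
    (hc : ContinuousOn f {0}ᶜ) (ha : a ≤ 0) (hv : v ∉ V) {ε : ℝ} (hε : 0 < ε) :
    ∃ C, ∀ (p : V) (t : ℝ), ε ≤ |t| → ‖evenTrace f V (t • v) p‖ ≤ C * (1 + ‖p‖) ^ a := by
  obtain ⟨C, hC⟩ := hf.exists_norm_coe_add_smul_le hc ha hv hε
  refine ⟨2 * C, fun p t ht => ?_⟩
  have hneg := hC (-p) t (le_max_of_le_right ht)
  rw [norm_neg, Submodule.coe_neg] at hneg
  exact (norm_add_le_of_le (hC p t (le_max_of_le_right ht)) hneg).trans_eq (by ring)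

theorem exists_norm_evenTrace_le_of_odd (hK : ContDiffOn ℝ 1 K {0}ᶜ)
    (hodd : ∀ z : E, z ≠ 0 → K (-z) = -K z) (hhom : IsPosHomogeneous a K) (ha : a ≤ 1)
    (hv : v ∉ V) :
    ∃ C, ∀ p : V, 1 ≤ ‖p‖ → ‖evenTrace K V v p‖ ≤ C * (1 + ‖p‖) ^ (a - 1) := by
  have hc := hK.continuousOn_fderiv_of_isOpen isOpen_compl_singleton le_rfl
  obtain ⟨C, hC⟩ := (hhom.fderiv_apply v).exists_norm_coe_add_smul_le
    (hc.clm_apply continuousOn_const) (sub_nonpos.2 ha) hv one_pos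
  refine ⟨C * 2, fun p hp => ?_⟩
  have hp0 : p ≠ 0 := norm_pos_iff.1 (one_pos.trans_le hp)
  have hsub : evenTrace K V v p = K (p + (1 : ℝ) • v) - K (p + (-1 : ℝ) • v) := by
    rw [evenTrace, sub_eq_add_neg, ← hodd _ (coe_add_smul_ne_zero hv (.inl hp0))]
    simp only [one_smul, neg_smul, neg_add, neg_neg]
  have hderiv : ∀ s : ℝ, HasDerivAt (fun s : ℝ => K (p + s • v)) (fderiv ℝ K (p + s • v) v) s :=
    fun s => hasDerivAt_comp_add_smul <| (hK.differentiableOn one_ne_zero).differentiableAt <|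
      isOpen_compl_singleton.mem_nhds (coe_add_smul_ne_zero hv (.inl hp0))
  calc ‖evenTrace K V v p‖ ≤ C * (1 + ‖p‖) ^ (a - 1) * (1 - -1) := by
        rw [hsub]
        exact norm_image_sub_le_of_norm_deriv_le_segment' (a := -1) (b := 1)
          (fun s _ => (hderiv s).hasDerivWithinAt)
          (fun s _ => hC p s (hp.trans (le_max_left _ _))) 1 (by norm_num)
    _ = C * 2 * (1 + ‖p‖) ^ (a - 1) := by ring

end Transversal

section TransversalIntegral

theorem integrable_one_add_norm_rpow_of_lt {E : Type*} [NormedAddCommGroup E] [NormedSpace ℝ E]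
    [FiniteDimensional ℝ E] [MeasurableSpace E] [BorelSpace E] {μ : Measure E}
    [μ.IsAddHaarMeasure] {a : ℝ} (ha : a < -(Module.finrank ℝ E : ℝ)) :
    Integrable (fun z : E => (1 + ‖z‖) ^ a) μ := by
  simpa using integrable_one_add_norm (μ := μ) (lt_neg_of_lt_neg ha)

variable {E F : Type*} [NormedAddCommGroup E] [NormedSpace ℝ E] [NormedAddCommGroup F]
  [NormedSpace ℝ F] {a : ℝ} {K : E → F} {V : Submodule ℝ E} [FiniteDimensional ℝ V]
  [MeasurableSpace V] [BorelSpace V] (μ : Measure V) [μ.IsAddHaarMeasure] {v : E}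

theorem IsPosHomogeneous.integrable_comp_coe_add {f : E → F} (hf : IsPosHomogeneous a f)
    (hc : ContinuousOn f {0}ᶜ) (ha : a < -(Module.finrank ℝ V : ℝ)) (hv : v ∉ V) :
    Integrable (fun p : V => f (p + v)) μ := by
  have ha0 : a ≤ 0 := ha.le.trans (by simp)
  obtain ⟨C, hC⟩ := hf.exists_norm_coe_add_smul_le hc ha0 hv one_pos
  refine ((integrable_one_add_norm_rpow_of_lt ha).const_mul C).mono'
    (continuous_comp_coe_add hc hv).aestronglyMeasurable (.of_forall fun p => ?_)
  simpa using hC p 1 (by simp)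

theorem integrable_evenTrace (hK : ContDiffOn ℝ 1 K {0}ᶜ)
    (hodd : ∀ z : E, z ≠ 0 → K (-z) = -K z) (hhom : IsPosHomogeneous a K)
    (ha : a - 1 < -(Module.finrank ℝ V : ℝ)) (hv : v ∉ V) :
    Integrable (evenTrace K V v) μ := by
  have ha1 : a ≤ 1 := sub_nonpos.1 (ha.le.trans (by simp))
  obtain ⟨C, hC⟩ := exists_norm_evenTrace_le_of_odd hK hodd hhom ha1 hv
  refine (continuous_evenTrace hK.continuousOn hv).locallyIntegrable.integrable_of_isBigO_cocompact
    (.of_bound C ?_) ((integrable_one_add_norm_rpow_of_lt ha).integrableAtFilter _)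
  filter_upwards [(tendsto_norm_cocompact_atTop (E := V)).eventually_ge_atTop 1] with p hp
  rw [Real.norm_of_nonneg (by positivity)]
  exact hC p hp

theorem integral_evenTrace_smul (hhom : IsPosHomogeneous (-(Module.finrank ℝ V : ℝ)) K)
    (hv : v ∉ V) {t : ℝ} (ht : 0 < t) :
    ∫ p, evenTrace K V (t • v) p ∂μ = ∫ p, evenTrace K V v p ∂μ := by
  have hscale := Measure.integral_comp_smul μ (evenTrace K V (t • v)) t
  simp only [evenTrace_smul_smul hhom hv ht, integral_smul, Real.rpow_neg ht.le, Real.rpow_natCast,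
    abs_of_pos (inv_pos.2 (pow_pos ht _))] at hscale
  exact (smul_right_injective F (inv_ne_zero (pow_ne_zero _ ht.ne')) hscale).symm

theorem hasDerivAt_integral_evenTrace_smul (hK : ContDiffOn ℝ 1 K {0}ᶜ)
    (hodd : ∀ z : E, z ≠ 0 → K (-z) = -K z) (hhom : IsPosHomogeneous a K)
    (ha : a - 1 < -(Module.finrank ℝ V : ℝ)) (hv : v ∉ V) :
    HasDerivAt (fun t : ℝ => ∫ p, evenTrace K V (t • v) p ∂μ)
      (∫ p, evenTrace (fun z => fderiv ℝ K z v) V v p ∂μ) 1 := by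
  have hc : ContinuousOn (fun z => fderiv ℝ K z v) {0}ᶜ :=
    (hK.continuousOn_fderiv_of_isOpen isOpen_compl_singleton le_rfl).clm_apply continuousOn_const
  obtain ⟨C, hC⟩ := (hhom.fderiv_apply v).exists_norm_evenTrace_smul_le hc
    (ha.le.trans (by simp)) hv one_half_pos
  have hnhds : Ioi (1 / 2 : ℝ) ∈ nhds 1 := Ioi_mem_nhds one_half_lt_one
  have hpos : ∀ t ∈ Ioi (1 / 2 : ℝ), t ≠ 0 := fun t ht => (one_half_pos.trans ht).ne'
  have hcont : ∀ᶠ t : ℝ in nhds 1, AEStronglyMeasurable (evenTrace K V (t • v)) μ := by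
    filter_upwards [hnhds] with t ht
    have htv : t • v ∉ V := (V.smul_mem_iff (hpos t ht)).not.2 hv
    exact (continuous_evenTrace hK.continuousOn htv).aestronglyMeasurable
  have hdiff := hasDerivAt_integral_of_dominated_loc_of_deriv_le
    (F' := fun t => evenTrace (fun z => fderiv ℝ K z v) V (t • v)) hnhds hcont
    (by simpa only [one_smul] using integrable_evenTrace μ hK hodd hhom ha hv)
    (by simpa only [one_smul] using (continuous_evenTrace hc hv).aestronglyMeasurable)
    (.of_forall fun p t ht => hC p t (ht.le.trans (le_abs_self t)))
    ((integrable_one_add_norm_rpow_of_lt ha).const_mul C)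
    (.of_forall fun p t ht =>
      hasDerivAt_evenTrace_smul (hK.differentiableOn one_ne_zero) hv (hpos t ht) p)
  simpa only [one_smul] using hdiff.2

theorem integral_evenTrace {f : E → F} (hf : Integrable (fun p : V => f (p + v)) μ) :
    ∫ p, evenTrace f V v p ∂μ = (2 : ℝ) • ∫ p : V, f (p + v) ∂μ := by
  have hneg := integral_neg_eq_self (fun p : V => f (p + v)) μ
  simp only [evenTrace]
  simp only [Submodule.coe_neg] at hneg
  rw [integral_add hf (by simpa using hf.comp_neg), hneg, two_smul]

theorem integrable_fderiv_coe_add (hK : ContDiffOn ℝ 1 K {0}ᶜ)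
    (hhom : IsPosHomogeneous a K) (ha : a - 1 < -(Module.finrank ℝ V : ℝ)) (hv : v ∉ V) :
    Integrable (fun p : V => fderiv ℝ K (p + v)) μ :=
  hhom.fderiv.integrable_comp_coe_add μ
    (hK.continuousOn_fderiv_of_isOpen isOpen_compl_singleton le_rfl) ha hv

theorem integral_fderiv_coe_add_apply_self (hK : ContDiffOn ℝ 1 K {0}ᶜ)
    (hodd : ∀ z : E, z ≠ 0 → K (-z) = -K z)
    (hhom : IsPosHomogeneous (-(Module.finrank ℝ V : ℝ)) K) (hv : v ∉ V) :
    ∫ p : V, fderiv ℝ K (p + v) v ∂μ = 0 := by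
  have hconst : HasDerivAt (fun t : ℝ => ∫ p, evenTrace K V (t • v) p ∂μ) 0 1 := by
    refine (hasDerivAt_const 1 (∫ p, evenTrace K V v p ∂μ)).congr_of_eventuallyEq ?_
    filter_upwards [Ioi_mem_nhds one_pos] with t ht using integral_evenTrace_smul μ hhom hv ht
  have hderiv := hasDerivAt_integral_evenTrace_smul μ hK hodd hhom (sub_one_lt _) hv
  have hint := (integrable_fderiv_coe_add μ hK hhom (sub_one_lt _) hv).apply_continuousLinearMap v
  have htwo := (integral_evenTrace μ hint).symm.trans (hderiv.unique hconst)
  exact (smul_eq_zero.1 htwo).resolve_left two_ne_zero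

theorem integral_fderiv_coe_add_apply [CompleteSpace F] (hK : ContDiffOn ℝ 1 K {0}ᶜ)
    (hodd : ∀ z : E, z ≠ 0 → K (-z) = -K z)
    (hhom : IsPosHomogeneous (-(Module.finrank ℝ V : ℝ)) K) (hv : v ∉ V) {w : E}
    (hw : w ∈ Submodule.span ℝ {v} ⊔ V) :
    ∫ p : V, fderiv ℝ K (p + v) w ∂μ = 0 := by
  have hint := integrable_fderiv_coe_add μ hK hhom (sub_one_lt _) hv
  set A : E →L[ℝ] F := ∫ p : V, fderiv ℝ K (p + v) ∂μ
  have happly : ∀ u, ∫ p : V, fderiv ℝ K (p + v) u ∂μ = A u := fun u =>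
    (ContinuousLinearMap.integral_apply hint u).symm
  have hv0 : A v = 0 := by
    rw [← happly, integral_fderiv_coe_add_apply_self μ hK hodd hhom hv]
  have hV0 : ∀ u ∈ V, A u = 0 := by
    intro u hu
    have hself := integral_fderiv_coe_add_apply_self μ hK hodd hhom
      (mt (V.add_mem_iff_left hu).1 hv)
    have htranslate : ∫ p : V, fderiv ℝ K (p + (v + u)) (v + u) ∂μ
        = ∫ p : V, fderiv ℝ K (p + v) (v + u) ∂μ := by
      rw [← integral_add_right_eq_self (fun p : V => fderiv ℝ K (p + v) (v + u)) (⟨u, hu⟩ : V)]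
      simp only [Submodule.coe_add, add_assoc, add_comm u v]
    rwa [htranslate, happly, map_add, hv0, zero_add] at hself
  have hle : Submodule.span ℝ {v} ⊔ V ≤ A.ker :=
    sup_le ((Submodule.span_singleton_le_iff_mem _ _).2 hv0) hV0
  rw [happly]
  exact hle hw

end TransversalIntegral

section AffineSubspace

section Algebra

variable {k M P : Type*} [DivisionRing k] [AddCommGroup M] [Module k M] [AddTorsor M P]

theorem nonempty_of_finrank_direction_pos {W : AffineSubspace k P}
    (hW : 0 < Module.finrank k W.direction) : (W : Set P).Nonempty := by
  rw [AffineSubspace.nonempty_iff_ne_bot]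
  rintro rfl
  rw [AffineSubspace.direction_bot, finrank_bot] at hW
  exact hW.false

theorem direction_affineSpan_insert_eq_top [FiniteDimensional k M] {W : AffineSubspace k P}
    {x : P} (hW : (W : Set P).Nonempty)
    (hrank : Module.finrank k M = Module.finrank k W.direction + 1) (hx : x ∉ W) :
    (affineSpan k (insert x (W : Set P))).direction = ⊤ := by
  obtain ⟨y₀, hy₀⟩ := hW
  have hv : x -ᵥ y₀ ∉ W.direction :=
    (AffineSubspace.vsub_right_mem_direction_iff_mem hy₀ x).not.2 hx
  rw [AffineSubspace.direction_affineSpan_insert hy₀, sup_comm]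
  exact Submodule.eq_top_of_finrank_eq ((Submodule.finrank_sup_span_singleton hv).trans hrank.symm)

theorem range_sub_coe_direction {W : AffineSubspace k M} {y₀ : M} (hy₀ : y₀ ∈ W) :
    range (fun p : W.direction => y₀ - p) = W := by
  ext y
  constructor
  · rintro ⟨p, rfl⟩
    rw [SetLike.mem_coe, ← AffineSubspace.vsub_left_mem_direction_iff_mem hy₀]
    simp
  · intro hy
    exact ⟨⟨y₀ - y, AffineSubspace.vsub_mem_direction hy₀ hy⟩, sub_sub_cancel y₀ y⟩

end Algebra

variable {E : Type*} [NormedAddCommGroup E] [NormedSpace ℝ E]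

theorem isometry_sub_coe_direction (W : AffineSubspace ℝ E) (y₀ : E) :
    Isometry fun p : W.direction => y₀ - p :=
  (IsometryEquiv.subLeft y₀).isometry.comp isometry_subtype_coe

theorem map_sub_hausdorffMeasure_direction [MeasurableSpace E] [BorelSpace E]
    {W : AffineSubspace ℝ E} {y₀ : E} (hy₀ : y₀ ∈ W) {d : ℝ} (hd : 0 ≤ d) :
    Measure.map (fun p : W.direction => y₀ - (p : E)) μH[d] = μH[d].restrict W := by
  rw [(isometry_sub_coe_direction W y₀).map_hausdorffMeasure (.inl hd), range_sub_coe_direction hy₀]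

end AffineSubspace

theorem statement3_general {E F : Type*} [NormedAddCommGroup E] [NormedSpace ℝ E]
    [MeasurableSpace E] [BorelSpace E] [NormedAddCommGroup F] [NormedSpace ℝ F] [CompleteSpace F]
    {K : E → F} (hK : ContDiffOn ℝ 1 K {0}ᶜ) (hodd : ∀ z : E, z ≠ 0 → K (-z) = -K z)
    {W : AffineSubspace ℝ E} [FiniteDimensional ℝ W.direction]
    {n : ℕ} (hW : Module.finrank ℝ W.direction = n) (hhom : IsPosHomogeneous (-(n : ℝ)) K)
    {x : E} (hx : x ∉ W) :
    IntegrableOn (fun y => fderiv ℝ K (x - y)) W μH[n] ∧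
      ∀ w ∈ (affineSpan ℝ (insert x (W : Set E))).direction,
        ∫ y in W, fderiv ℝ K (x - y) w ∂μH[n] = 0 := by
  obtain hempty | ⟨y₀, hy₀⟩ := (W : Set E).eq_empty_or_nonempty
  · simp [hempty]
  subst hW
  have hv : x - y₀ ∉ W.direction := (AffineSubspace.vsub_right_mem_direction_iff_mem hy₀ x).not.2 hx
  have hemb := (isometry_sub_coe_direction W y₀).isClosedEmbedding.measurableEmbedding
  have hsub : ∀ p : W.direction, x - (y₀ - p) = p + (x - y₀) := fun p => by abel
  rw [IntegrableOn, ← map_sub_hausdorffMeasure_direction hy₀ (Nat.cast_nonneg _),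
    hemb.integrable_map_iff, AffineSubspace.direction_affineSpan_insert hy₀]
  simp only [hemb.integral_map, Function.comp_def, hsub]
  exact ⟨integrable_fderiv_coe_add _ hK hhom (sub_one_lt _) hv,
    fun w hw => integral_fderiv_coe_add_apply _ hK hodd hhom hv hw⟩

/-- if `K ∈ C¹(ℝ^{n+1}∖{0})` is odd and homogeneous of degree `-n`, then for
every `n`-plane `L`, every `x ∉ L` and every coordinate direction `j`, the integral
`∫_L (∂_j K)(x-y) dℋⁿ(y)` converges absolutely and equals `0`. -/
theorem statement3 (n : ℕ) (hn : 1 ≤ n) (K : Euc (n + 1) → ℝ)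
    (hK : ContDiffOn ℝ 1 K {(0 : Euc (n + 1))}ᶜ)
    (hodd : ∀ z : Euc (n + 1), z ≠ 0 → K (-z) = -K z)
    (hhom : ∀ l : ℝ, 0 < l → ∀ z : Euc (n + 1), z ≠ 0 → K (l • z) = l ^ (-(n : ℝ)) * K z) :
    ∀ L : Set (Euc (n + 1)), IsNPlane n L → ∀ x ∉ L, ∀ j : Fin (n + 1),
      Integrable (fun y => fderiv ℝ K (x - y) (EuclideanSpace.single j 1))
          ((μH[(n : ℝ)]).restrict L) ∧
      ∫ y in L, fderiv ℝ K (x - y) (EuclideanSpace.single j 1) ∂(μH[(n : ℝ)]) = 0 := by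
  rintro L ⟨W, rfl, hW⟩ x hx j
  obtain ⟨hint, hzero⟩ := statement3_general hK hodd hW hhom hx
  have htop := direction_affineSpan_insert_eq_top
    (nonempty_of_finrank_direction_pos (hn.trans_eq hW.symm)) (by simp [hW]) hx
  exact ⟨hint.apply_continuousLinearMap _, hzero _ (htop ▸ Submodule.mem_top)⟩
end
end

section
/- Let 0 < n < d be integers, β > 0, A, C₀, c₁ > 0, and let μ be an n-ADR measure on ℝ^d with support E. There is a constant C, depending only on n, d, β, A, C₀, c₁ and the ADR constant of μ, with the following property. Let S satisfy |S(x,y)| ≤ A|x−y|^{−(n+β)} and |S(x,y)−S(x,y′)| ≤ A|y−y′| |x−y|^{−(n+β+1)} for |y−y′| ≤ |x−y|/2. Let x ∈ ℝ^d∖E with ℓ = dist(x,E), and suppose that for each integer k ≥ 0 we are given an n-dimensional affine subspace L_k ⊂ ℝ^d intersecting B(x, 2^k ℓ), a constant c_k ∈ [0, C₀], and a number α_k ∈ [0,1] such that: (i) d_{B(x, 2^{k+1}ℓ)}(μ, c_k ℋⁿ|_{L_k}) ≤ α_k (2^k ℓ)^{n+1}; (ii) |c_{k+1} − c_k| ≤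 α_{k+1}; (iii) d_H(L_k ∩ B(x, 2^{k+1}ℓ), L_{k+1} ∩ B(x, 2^{k+1}ℓ)) ≤ α_{k+1} 2^{k+1} ℓ; (iv) dist(x, L_0) ≥ c₁ ℓ. Then | ∫ S(x,y) dμ(y) − c_0 ∫_{L_0} S(x,y) dℋⁿ(y) | ≤ C ℓ^{−β} Σ_{k≥0} 2^{−kβ} α_k. -/
open MeasureTheory Metric Set
open scoped ENNReal NNReal

noncomputable section

/-!
A partition of unity into annular cutoffs `χ_k` of the dyadic annuli around `x` splits `S(x, ·)`
into pieces `S(x, ·) χ_k`. By the size and smoothness of the kernel, such a piece is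
`(2 ^ k ℓ) ^ (-(n + β + 1))`, up to a constant, times a `1`-Lipschitz function supported in a ball
of radius comparable to `2 ^ k ℓ`. In its integral `μ` may be replaced by `c_k ℋⁿ|_{L_k}` with error
`(2 ^ k ℓ) ^ (-β) α_k`, and then, one scale after the other, by `c_0 ℋⁿ|_{L_0}` with error
`(2 ^ k ℓ) ^ (-β) (α_0 + ⋯ + α_k)`.

For the change of plane, Hausdorff closeness of `L_i` and `L_{i+1}` in a ball makes the tilt between
their directions `O(α_{i+1})`. The projection of one plane onto the other is `1`-Lipschitz, hence
does not increase Hausdorff measure, and moves points of the ball by `O(α_{i+1})` times the radius;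
doing this in both directions compares the two integrals.

Summing over the scales, `∑ 2 ^ (-kβ) (α_0 + ⋯ + α_k)` is the Cauchy product of
`∑ 2 ^ (-kβ) α_k` with a convergent geometric series.
-/

/-! ### Integrals of functions supported in a set of finite measure -/

section BoundedSupport

variable {X : Type*} [MeasurableSpace X] {σ τ : Measure X} {s : Set X} {F : X → ℝ} {M : ℝ}

lemma integrable_of_support_subset_of_abs_le (hs : σ s ≠ ∞) (hF : AEStronglyMeasurable F σ)
    (hsupp : Function.support F ⊆ s) (hM : ∀ y, |F y| ≤ M) : Integrable F σ :=
  (integrableOn_iff_integrable_of_support_subset hsupp).1 <|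
    Measure.integrableOn_of_bounded hs hF (.of_forall hM)

lemma integral_abs_le_of_support_subset (hs : σ s ≠ ∞) (hsupp : Function.support F ⊆ s)
    (hM : ∀ y, |F y| ≤ M) : ∫ y, |F y| ∂σ ≤ M * σ.real s := by
  have h : ‖∫ y in s, |F y| ∂σ‖ ≤ M * σ.real s :=
    norm_setIntegral_le_of_norm_le_const hs.lt_top fun y _ => by simpa using hM y
  rw [setIntegral_eq_integral_of_forall_compl_eq_zero fun y hy => by
    simpa using Function.notMem_support.1 fun hy' => hy (hsupp hy')] at h
  exact (le_abs_self _).trans h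

lemma abs_integral_le_of_support_subset (hs : σ s ≠ ∞) (hsupp : Function.support F ⊆ s)
    (hM : ∀ y, |F y| ≤ M) : |∫ y, F y ∂σ| ≤ M * σ.real s :=
  abs_integral_le_integral_abs.trans (integral_abs_le_of_support_subset hs hsupp hM)

lemma toReal_lintegral_ofReal_le_add {e : ℝ} (he : 0 ≤ e) (hF : Integrable F σ)
    (h : ∫⁻ y, .ofReal (F y) ∂τ ≤ ∫⁻ y, .ofReal (F y) ∂σ + .ofReal e) :
    (∫⁻ y, .ofReal (F y) ∂τ).toReal ≤ (∫⁻ y, .ofReal (F y) ∂σ).toReal + e := by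
  have hfin : ∫⁻ y, .ofReal (F y) ∂σ ≠ ∞ := hF.lintegral_lt_top.ne
  have h' := ENNReal.toReal_mono (ENNReal.add_ne_top.2 ⟨hfin, ENNReal.ofReal_ne_top⟩) h
  rwa [ENNReal.toReal_add hfin ENNReal.ofReal_ne_top, ENNReal.toReal_ofReal he] at h'

lemma abs_integral_sub_integral_le_of_lintegral_le {e : ℝ} (he : 0 ≤ e)
    (hσ : Integrable F σ) (hτ : Integrable F τ)
    (h₁ : ∀ G ∈ ({F, -F} : Set (X → ℝ)),
      ∫⁻ y, .ofReal (G y) ∂τ ≤ ∫⁻ y, .ofReal (G y) ∂σ + .ofReal e)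
    (h₂ : ∀ G ∈ ({F, -F} : Set (X → ℝ)),
      ∫⁻ y, .ofReal (G y) ∂σ ≤ ∫⁻ y, .ofReal (G y) ∂τ + .ofReal e) :
    |∫ y, F y ∂σ - ∫ y, F y ∂τ| ≤ 2 * e := by
  have p₁ := toReal_lintegral_ofReal_le_add he hσ (h₁ F (by simp))
  have p₂ := toReal_lintegral_ofReal_le_add he hτ (h₂ F (by simp))
  have m₁ := toReal_lintegral_ofReal_le_add he hσ.neg (h₁ (-F) (by simp))
  have m₂ := toReal_lintegral_ofReal_le_add he hτ.neg (h₂ (-F) (by simp))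
  rw [integral_eq_lintegral_pos_part_sub_lintegral_neg_part hσ,
    integral_eq_lintegral_pos_part_sub_lintegral_neg_part hτ, abs_le]
  simp only [Pi.neg_apply] at m₁ m₂
  constructor <;> linarith

end BoundedSupport

/-! ### Hausdorff measure on `n`-planes -/

lemma restrict_hausdorffMeasure_le_map {X Y : Type*} [EMetricSpace X] [MeasurableSpace X]
    [BorelSpace X] [EMetricSpace Y] [MeasurableSpace Y] [BorelSpace Y] {f : X → Y}
    (hf : LipschitzWith 1 f) {s : Set X} {t : Set Y} (hst : t ⊆ f '' s) {a : ℝ} (ha : 0 ≤ a) :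
    μH[a].restrict t ≤ (μH[a].restrict s).map f := by
  have hfm : Measurable f := hf.continuous.measurable
  refine Measure.le_iff.2 fun u hu => ?_
  rw [Measure.map_apply hfm hu, Measure.restrict_apply hu, Measure.restrict_apply (hfm hu)]
  have hsub : u ∩ t ⊆ f '' (f ⁻¹' u ∩ s) := by
    rintro _ ⟨hyu, hyt⟩
    obtain ⟨z, hz, rfl⟩ := hst hyt
    exact ⟨z, ⟨hyu, hz⟩, rfl⟩
  calc μH[a] (u ∩ t) ≤ μH[a] (f '' (f ⁻¹' u ∩ s)) := measure_mono hsub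
    _ ≤ μH[a] (f ⁻¹' u ∩ s) := by simpa using hf.hausdorffMeasure_image_le ha (f ⁻¹' u ∩ s)

/-- The `n`-dimensional Hausdorff measure of the unit ball of an `n`-plane, in Mathlib's
normalization of `μH[n]`. -/
def hausdorffUnitBall (n : ℕ) : ℝ :=
  (μH[n] : Measure (EuclideanSpace ℝ (Fin n))).real (ball 0 1)

lemma hausdorffUnitBall_nonneg (n : ℕ) : 0 ≤ hausdorffUnitBall n := measureReal_nonneg

lemma hausdorffMeasure_closedBall_euclideanSpace (n : ℕ) (z : EuclideanSpace ℝ (Fin n)) {r : ℝ}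
    (hr : 0 ≤ r) : μH[n] (closedBall z r) = .ofReal (hausdorffUnitBall n * r ^ n) := by
  have hHaar : (μH[n] : Measure (EuclideanSpace ℝ (Fin n))).IsAddHaarMeasure := by
    simpa using isAddHaarMeasure_hausdorffMeasure (E := EuclideanSpace ℝ (Fin n))
  rw [Measure.addHaar_closedBall _ _ hr, finrank_euclideanSpace_fin, mul_comm,
    ENNReal.ofReal_mul (hausdorffUnitBall_nonneg n), hausdorffUnitBall,
    ofReal_measureReal measure_ball_lt_top.ne]

section Planes

variable {V : Type*} [NormedAddCommGroup V] [InnerProductSpace ℝ V] {n : ℕ}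
  {W : AffineSubspace ℝ V} [FiniteDimensional ℝ W.direction]

lemma exists_isometry_image_closedBall (hW : Module.finrank ℝ W.direction = n) {p : V}
    (hp : p ∈ W) (r : ℝ) :
    ∃ g : EuclideanSpace ℝ (Fin n) → V, Isometry g ∧
      g '' closedBall 0 r = (W : Set V) ∩ closedBall p r := by
  let e : EuclideanSpace ℝ (Fin n) ≃ₗᵢ[ℝ] W.direction :=
    ((stdOrthonormalBasis ℝ W.direction).reindex (finCongr hW)).repr.symm
  refine ⟨fun v => e v + p, ?_, Subset.antisymm ?_ ?_⟩
  · exact (isometry_add_right p).comp (isometry_subtype_coe.comp e.isometry)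
  · rintro _ ⟨v, hv, rfl⟩
    refine ⟨AffineSubspace.vadd_mem_of_mem_direction (e v).2 hp, ?_⟩
    have hev : ‖(e v : V)‖ = ‖v‖ := e.norm_map v
    simpa [dist_eq_norm, hev] using hv
  · rintro y ⟨hyW, hy⟩
    have hv : y - p ∈ W.direction := AffineSubspace.vsub_mem_direction hyW hp
    refine ⟨e.symm ⟨y - p, hv⟩, ?_, by simp⟩
    simpa [dist_eq_norm] using hy

lemma isCompact_plane_inter_closedBall (W : AffineSubspace ℝ V)
    [FiniteDimensional ℝ W.direction] (x : V) (r : ℝ) :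
    IsCompact ((W : Set V) ∩ closedBall x r) := by
  rcases (W : Set V).eq_empty_or_nonempty with hW | ⟨p, hp⟩
  · simp [hW]
  obtain ⟨g, hg, himage⟩ := exists_isometry_image_closedBall rfl hp (r + dist x p)
  refine (himage ▸ (isCompact_closedBall 0 _).image hg.continuous).of_isClosed_subset
    (W.closed_of_finiteDimensional.inter isClosed_closedBall) ?_
  exact inter_subset_inter_right _ (closedBall_subset_closedBall' le_rfl)

variable [MeasurableSpace V] [BorelSpace V]

lemma hausdorffMeasure_plane_inter_closedBall (hW : Module.finrank ℝ W.direction = n) {p : V}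
    (hp : p ∈ W) {r : ℝ} (hr : 0 ≤ r) :
    μH[n] ((W : Set V) ∩ closedBall p r) = .ofReal (hausdorffUnitBall n * r ^ n) := by
  obtain ⟨g, hg, himage⟩ := exists_isometry_image_closedBall hW hp r
  rw [← himage, hg.hausdorffMeasure_image (.inl n.cast_nonneg),
    hausdorffMeasure_closedBall_euclideanSpace n 0 hr]

lemma hausdorffMeasure_restrict_plane_closedBall_le (hW : Module.finrank ℝ W.direction = n)
    (z : V) {r : ℝ} (hr : 0 ≤ r) :
    μH[n].restrict (W : Set V) (closedBall z r) ≤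
      .ofReal (hausdorffUnitBall n * (2 * r) ^ n) := by
  rw [Measure.restrict_apply measurableSet_closedBall, inter_comm]
  rcases ((W : Set V) ∩ closedBall z r).eq_empty_or_nonempty with hempty | ⟨p, hpW, hpz⟩
  · simp [hempty]
  rw [← hausdorffMeasure_plane_inter_closedBall hW hpW (by positivity)]
  refine measure_mono (inter_subset_inter_right _ (closedBall_subset_closedBall' ?_))
  rw [mem_closedBall, dist_comm] at hpz
  linarith

lemma hausdorffMeasure_restrict_plane_closedBall_ne_top
    (hW : Module.finrank ℝ W.direction = n) (z : V) {r : ℝ} (hr : 0 ≤ r) :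
    μH[n].restrict (W : Set V) (closedBall z r) ≠ ∞ :=
  ((hausdorffMeasure_restrict_plane_closedBall_le hW z hr).trans_lt ENNReal.ofReal_lt_top).ne

lemma measureReal_restrict_plane_closedBall_le (hW : Module.finrank ℝ W.direction = n)
    (z : V) {r : ℝ} (hr : 0 ≤ r) :
    (μH[n].restrict (W : Set V)).real (closedBall z r) ≤
      hausdorffUnitBall n * (2 * r) ^ n :=
  ENNReal.toReal_le_of_le_ofReal (mul_nonneg (hausdorffUnitBall_nonneg n) (by positivity))
    (hausdorffMeasure_restrict_plane_closedBall_le hW z hr)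

end Planes

/-! ### Lipschitz bumps -/

/-- The test functions of the distance `d_B` for the ball `B = B(x, R)`. The bound `|F| ≤ R` is
automatic when the space has points at every distance from `x`. -/
structure IsLipschitzBump {X : Type*} [PseudoMetricSpace X] (x : X) (R : ℝ) (F : X → ℝ) :
    Prop where
  lipschitz : LipschitzWith 1 F
  support_subset : Function.support F ⊆ closedBall x R
  abs_le : ∀ y, |F y| ≤ R

namespace IsLipschitzBump

variable {X : Type*} [PseudoMetricSpace X] {x : X} {R : ℝ} {F : X → ℝ}

lemma neg (hF : IsLipschitzBump x R F) : IsLipschitzBump x R (-F) where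
  lipschitz := hF.lipschitz.neg
  support_subset := by rw [Function.support_neg]; exact hF.support_subset
  abs_le y := by simpa using hF.abs_le y

lemma mono (hF : IsLipschitzBump x R F) {R' : ℝ} (hR : R ≤ R') : IsLipschitzBump x R' F where
  lipschitz := hF.lipschitz
  support_subset := hF.support_subset.trans (closedBall_subset_closedBall hR)
  abs_le y := (hF.abs_le y).trans hR

lemma eq_zero_of_lt_dist (hF : IsLipschitzBump x R F) {y : X} (hy : R < dist y x) : F y = 0 :=
  Function.notMem_support.1 fun h => hy.not_ge (mem_closedBall.1 (hF.support_subset h))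

lemma integrable [MeasurableSpace X] [OpensMeasurableSpace X] (hF : IsLipschitzBump x R F)
    {σ : Measure X} (hσ : σ (closedBall x R) ≠ ∞) : Integrable F σ :=
  integrable_of_support_subset_of_abs_le hσ
    hF.lipschitz.continuous.measurable.aestronglyMeasurable hF.support_subset hF.abs_le

end IsLipschitzBump

/-! ### Comparison of two planes -/

lemma exists_mem_dist_le_of_hausdorffDist_le {X : Type*} [PseudoMetricSpace X] {s t : Set X}
    (hs : Bornology.IsBounded s) (ht : IsCompact t) (hne : t.Nonempty) {η : ℝ}
    (h : hausdorffDist s t ≤ η) {y : X} (hy : y ∈ s) : ∃ z ∈ t, dist y z ≤ η := by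
  obtain ⟨z, hz, hdist⟩ := ht.exists_infDist_eq_dist hne y
  refine ⟨z, hz, hdist ▸ (infDist_le_hausdorffDist_of_mem hy ?_).trans h⟩
  exact hausdorffEDist_ne_top_of_nonempty_of_bounded ⟨y, hy⟩ hne hs ht.isBounded

section Tilt

variable {V : Type*} [NormedAddCommGroup V] [InnerProductSpace ℝ V]

/-- The opening of `U` towards `U'` is at most `ε`: every vector of `U` is within `ε` times its norm
of its projection to `U'`. -/
def TiltLE (ε : ℝ) (U U' : Submodule ℝ V) [U'.HasOrthogonalProjection] : Prop :=
  ∀ v ∈ U, ‖v - U'.starProjection v‖ ≤ ε * ‖v‖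

lemma norm_sub_starProjection_le (U : Submodule ℝ V) [U.HasOrthogonalProjection] (v : V) {u : V}
    (hu : u ∈ U) : ‖v - U.starProjection v‖ ≤ ‖v - u‖ := by
  rw [Submodule.starProjection_minimal]
  exact ciInf_le ⟨0, by rintro _ ⟨y, rfl⟩; exact norm_nonneg _⟩ (⟨u, hu⟩ : U)

namespace TiltLE

variable {ε : ℝ} {U U' : Submodule ℝ V} [U'.HasOrthogonalProjection]

lemma mono (h : TiltLE ε U U') {ε' : ℝ} (hε : ε ≤ ε') : TiltLE ε' U U' := fun v hv =>
  (h v hv).trans (by gcongr)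

lemma norm_le_two_mul (h : TiltLE ε U U') (hε : ε ≤ 1 / 2) {v : V} (hv : v ∈ U) :
    ‖v‖ ≤ 2 * ‖U'.starProjection v‖ := by
  have h₁ := h v hv
  have h₂ : ‖v‖ ≤ ‖v - U'.starProjection v‖ + ‖U'.starProjection v‖ := by
    simpa using norm_add_le (v - U'.starProjection v) (U'.starProjection v)
  have h₃ : ε * ‖v‖ ≤ 1 / 2 * ‖v‖ := by gcongr
  linarith

lemma exists_starProjection_eq [FiniteDimensional ℝ U] [FiniteDimensional ℝ U']
    (h : TiltLE ε U U') (hε : ε ≤ 1 / 2) (hdim : Module.finrank ℝ U = Module.finrank ℝ U')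
    {u : V} (hu : u ∈ U') : ∃ v ∈ U, U'.starProjection v = u := by
  let f : U →ₗ[ℝ] U' := (U'.orthogonalProjectionOnto : V →ₗ[ℝ] U') ∘ₗ U.subtype
  have hf : ∀ v, (f v : V) = U'.starProjection v := fun _ => rfl
  have hinj : Function.Injective f := by
    rw [injective_iff_map_eq_zero]
    intro v hv
    have hle := h.norm_le_two_mul hε v.2
    rw [← hf, hv] at hle
    simpa using hle
  obtain ⟨v, hv⟩ :=
    (LinearMap.injective_iff_surjective_of_finrank_eq_finrank hdim).1 hinj ⟨u, hu⟩
  exact ⟨v, v.2, by rw [← hf, hv]⟩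

lemma symm [FiniteDimensional ℝ U] [FiniteDimensional ℝ U'] (h : TiltLE ε U U')
    (hε₀ : 0 ≤ ε) (hε : ε ≤ 1 / 2) (hdim : Module.finrank ℝ U = Module.finrank ℝ U') :
    TiltLE (2 * ε) U' U := by
  intro u hu
  obtain ⟨v, hv, rfl⟩ := h.exists_starProjection_eq hε hdim hu
  set Pv := U'.starProjection v
  calc ‖Pv - U.starProjection Pv‖ ≤ ‖Pv - v‖ := norm_sub_starProjection_le U Pv hv
    _ = ‖v - Pv‖ := norm_sub_rev _ _
    _ ≤ ε * ‖v‖ := h v hv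
    _ ≤ ε * (2 * ‖Pv‖) := by gcongr; exact h.norm_le_two_mul hε hv
    _ = 2 * ε * ‖Pv‖ := by ring

end TiltLE

section PlaneComparison

variable {W W' : AffineSubspace ℝ V} {p p' x : V} {ε R : ℝ}

/-- A vector of length `r / 2` moves the base point to a point of `W` in the ball, and is therefore
a difference of points of `W'` up to `2 * η`. -/
lemma tiltLE_of_forall_exists_dist_le [W'.direction.HasOrthogonalProjection] {r η : ℝ}
    (hr : 0 < r) (hp : p ∈ W) (hpx : dist p x ≤ r / 2)
    (h : ∀ y ∈ (W : Set V) ∩ closedBall x r, ∃ z ∈ W', dist y z ≤ η) :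
    TiltLE (4 * (η / r)) W.direction W'.direction := by
  intro v hv
  rcases eq_or_ne v 0 with rfl | hv₀
  · simp
  have : 0 < ‖v‖ := norm_pos_iff.2 hv₀
  set t := r / (2 * ‖v‖)
  have ht : 0 < t := by positivity
  have htv : ‖t • v‖ = r / 2 := by
    rw [norm_smul, Real.norm_of_nonneg ht.le]; simp only [t]; field_simp
  have hqW : t • v + p ∈ W :=
    AffineSubspace.vadd_mem_of_mem_direction (W.direction.smul_mem t hv) hp
  have hqx : t • v + p ∈ closedBall x r := by
    rw [mem_closedBall]
    calc dist (t • v + p) x ≤ dist (t • v + p) p + dist p x := dist_triangle _ _ _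
      _ ≤ r / 2 + r / 2 := by rw [dist_add_self_left, htv]; gcongr
      _ = r := add_halves r
  have hpB : p ∈ closedBall x r := mem_closedBall.2 (by linarith)
  obtain ⟨p', hp', hpp'⟩ := h p ⟨hp, hpB⟩
  obtain ⟨q', hq', hqq'⟩ := h (t • v + p) ⟨hqW, hqx⟩
  refine le_of_mul_le_mul_left ?_ ht
  calc t * ‖v - W'.direction.starProjection v‖
      = ‖t • v - W'.direction.starProjection (t • v)‖ := by
        rw [map_smul, ← smul_sub, norm_smul, Real.norm_of_nonneg ht.le]
    _ ≤ ‖t • v - (q' - p')‖ :=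
        norm_sub_starProjection_le _ _ (AffineSubspace.vsub_mem_direction hq' hp')
    _ = ‖(t • v + p - q') - (p - p')‖ := by congr 1; abel
    _ ≤ η + η := (norm_sub_le _ _).trans
        (add_le_add (by rwa [← dist_eq_norm]) (by rwa [← dist_eq_norm]))
    _ = t * (4 * (η / r) * ‖v‖) := by simp only [t]; field_simp; ring

variable [FiniteDimensional ℝ W.direction] [FiniteDimensional ℝ W'.direction]

lemma TiltLE.exists_lipschitz_map (h : TiltLE ε W.direction W'.direction) (hε : ε ≤ 1 / 2)
    (hdim : Module.finrank ℝ W.direction = Module.finrank ℝ W'.direction)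
    (hp : p ∈ W) (hp' : p' ∈ W') :
    ∃ T : V → V, LipschitzWith 1 T ∧ (W' : Set V) ⊆ T '' W ∧ ∀ y ∈ W,
      dist (T y) y ≤ dist p p' + ε * dist y p ∧ dist y p ≤ 2 * dist (T y) p' := by
  let P := W'.direction.starProjection
  refine ⟨fun y => P (y - p) + p', ?_, fun z hz => ?_, fun y hy => ⟨?_, ?_⟩⟩
  · refine LipschitzWith.mk_one fun y z => ?_
    rw [dist_add_right, dist_eq_norm, ← map_sub, sub_sub_sub_cancel_right, dist_eq_norm]
    exact W'.direction.norm_starProjection_apply_le _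
  · obtain ⟨v, hv, hPv⟩ := h.exists_starProjection_eq hε hdim
      (AffineSubspace.vsub_mem_direction hz hp')
    exact ⟨v + p, AffineSubspace.vadd_mem_of_mem_direction hv hp, by simp [P, hPv]⟩
  · have htilt := h (y - p) (AffineSubspace.vsub_mem_direction hy hp)
    calc dist (P (y - p) + p') y = ‖(p' - p) - (y - p - P (y - p))‖ := by
          rw [dist_eq_norm]; congr 1; abel
      _ ≤ ‖p' - p‖ + ‖y - p - P (y - p)‖ := norm_sub_le _ _
      _ ≤ dist p p' + ε * dist y p := by
        rw [dist_comm, dist_eq_norm, dist_eq_norm]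
        gcongr
  · simpa [dist_eq_norm] using
      h.norm_le_two_mul hε (AffineSubspace.vsub_mem_direction hy hp)

variable [MeasurableSpace V] [BorelSpace V] {n : ℕ} {F : V → ℝ}

lemma TiltLE.lintegral_le_add (h : TiltLE ε W.direction W'.direction) (hε₀ : 0 ≤ ε)
    (hε : ε ≤ 1 / 2) (hW : Module.finrank ℝ W.direction = n)
    (hW' : Module.finrank ℝ W'.direction = n) (hp : p ∈ W) (hp' : p' ∈ W') (hR : 0 ≤ R)
    (hp'x : dist p' x ≤ R) (hF : IsLipschitzBump x R F) :
    ∫⁻ y in W', .ofReal (F y) ∂μH[n] ≤ ∫⁻ y in W, .ofReal (F y) ∂μH[n] +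
      .ofReal ((dist p p' + ε * (4 * R)) * (hausdorffUnitBall n * (4 * R) ^ n)) := by
  obtain ⟨T, hT, hsurj, hTW⟩ := h.exists_lipschitz_map hε (hW.trans hW'.symm) hp hp'
  have hFm : Measurable fun y => ENNReal.ofReal (F y) :=
    hF.lipschitz.continuous.measurable.ennreal_ofReal
  set e := dist p p' + ε * (4 * R)
  have he : 0 ≤ e := by positivity
  have hpointwise : ∀ y ∈ (W : Set V), ENNReal.ofReal (F (T y)) ≤
      .ofReal (F y) + (closedBall p (4 * R)).indicator (fun _ => .ofReal e) y := by
    intro y hy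
    obtain ⟨hmove, hspread⟩ := hTW y hy
    by_cases hyp : y ∈ closedBall p (4 * R)
    · rw [indicator_of_mem hyp]
      refine (ENNReal.ofReal_le_ofReal ?_).trans ENNReal.ofReal_add_le
      have hlip := (le_abs_self _).trans (hF.lipschitz.dist_le_mul (T y) y)
      have hbound : ε * dist y p ≤ ε * (4 * R) := by gcongr; exact hyp
      simp only [NNReal.coe_one, one_mul] at hlip
      linarith
    · rw [mem_closedBall, not_le] at hyp
      have htri := dist_triangle_right (T y) p' x
      rw [hF.eq_zero_of_lt_dist (y := T y) (by linarith), ENNReal.ofReal_zero]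
      exact bot_le
  calc ∫⁻ y in W', .ofReal (F y) ∂μH[n]
      ≤ ∫⁻ y, .ofReal (F y) ∂(μH[n].restrict (W : Set V)).map T :=
        lintegral_mono' (restrict_hausdorffMeasure_le_map hT hsurj n.cast_nonneg) le_rfl
    _ = ∫⁻ y in W, .ofReal (F (T y)) ∂μH[n] := lintegral_map hFm hT.continuous.measurable
    _ ≤ ∫⁻ y in W, (.ofReal (F y) +
          (closedBall p (4 * R)).indicator (fun _ => .ofReal e) y) ∂μH[n] :=
        setLIntegral_mono' W.closed_of_finiteDimensional.measurableSet hpointwise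
    _ = ∫⁻ y in W, .ofReal (F y) ∂μH[n] +
          .ofReal e * μH[n] ((W : Set V) ∩ closedBall p (4 * R)) := by
        rw [lintegral_add_left hFm, lintegral_indicator_const measurableSet_closedBall,
          Measure.restrict_apply measurableSet_closedBall, inter_comm]
    _ = _ := by
        rw [hausdorffMeasure_plane_inter_closedBall hW hp (by positivity),
          ENNReal.ofReal_mul he]

variable {α r δ : ℝ}

lemma IsLipschitzBump.integrable_plane (hF : IsLipschitzBump x R F)
    (hW : Module.finrank ℝ W.direction = n) (hR : 0 ≤ R) :
    Integrable F (μH[n].restrict (W : Set V)) :=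
  hF.integrable (hausdorffMeasure_restrict_plane_closedBall_ne_top hW x hR)

lemma IsLipschitzBump.abs_setIntegral_plane_le (hF : IsLipschitzBump x R F)
    (hW : Module.finrank ℝ W.direction = n) (hR : 0 ≤ R) :
    |∫ y in W, F y ∂μH[n]| ≤ 2 ^ n * hausdorffUnitBall n * R ^ (n + 1) :=
  calc |∫ y in W, F y ∂μH[n]| ≤ R * (μH[n].restrict (W : Set V)).real (closedBall x R) :=
        abs_integral_le_of_support_subset
          (hausdorffMeasure_restrict_plane_closedBall_ne_top hW x hR) hF.support_subset hF.abs_le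
    _ ≤ R * (hausdorffUnitBall n * (2 * R) ^ n) := by
        gcongr; exact measureReal_restrict_plane_closedBall_le hW x hR
    _ = 2 ^ n * hausdorffUnitBall n * R ^ (n + 1) := by ring

lemma TiltLE.abs_setIntegral_sub_le (h : TiltLE ε W.direction W'.direction) (hε₀ : 0 ≤ ε)
    (hε : ε ≤ 1 / 4) (hW : Module.finrank ℝ W.direction = n)
    (hW' : Module.finrank ℝ W'.direction = n) (hp : p ∈ W) (hp' : p' ∈ W') (hR : 0 ≤ R)
    (hpx : dist p x ≤ R) (hp'x : dist p' x ≤ R) (hF : IsLipschitzBump x R F) :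
    |∫ y in W, F y ∂μH[n] - ∫ y in W', F y ∂μH[n]| ≤
      2 * ((dist p p' + 2 * ε * (4 * R)) * (hausdorffUnitBall n * (4 * R) ^ n)) := by
  have hω := hausdorffUnitBall_nonneg n
  have hG : ∀ G ∈ ({F, -F} : Set (V → ℝ)), IsLipschitzBump x R G := by
    rintro G (rfl | rfl)
    exacts [hF, hF.neg]
  refine abs_integral_sub_integral_le_of_lintegral_le (by positivity)
    (hF.integrable_plane hW hR) (hF.integrable_plane hW' hR) (fun G hG' => ?_) fun G hG' => ?_
  · exact (h.mono (by linarith)).lintegral_le_add (by positivity) (by linarith) hW hW' hp hp' hR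
      hp'x (hG G hG')
  · rw [dist_comm p p']
    exact (h.symm hε₀ (by linarith) (hW.trans hW'.symm)).lintegral_le_add (by positivity)
      (by linarith) hW' hW hp' hp hR hpx (hG G hG')

lemma abs_setIntegral_plane_sub_le_of_hausdorffDist_le (hW : Module.finrank ℝ W.direction = n)
    (hW' : Module.finrank ℝ W'.direction = n) (hr : 0 < r) (hrR : r ≤ R) (hp : p ∈ W)
    (hpx : dist p x ≤ r / 2) (hne : ((W' : Set V) ∩ closedBall x r).Nonempty) (hα : 0 ≤ α)
    (hdist : hausdorffDist ((W : Set V) ∩ closedBall x r) ((W' : Set V) ∩ closedBall x r) ≤ α * r)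
    (hF : IsLipschitzBump x R F) :
    |∫ y in W, F y ∂μH[n] - ∫ y in W', F y ∂μH[n]| ≤
      66 * 4 ^ n * hausdorffUnitBall n * R ^ (n + 1) * α := by
  have hω := hausdorffUnitBall_nonneg n
  have hR : 0 ≤ R := hr.le.trans hrR
  -- For `1 / 16 ≤ α` the tilt `4 * α` is out of control, but the trivial bounds suffice.
  rcases le_or_gt (1 / 16) α with hlarge | hsmall
  · calc |∫ y in W, F y ∂μH[n] - ∫ y in W', F y ∂μH[n]|
        ≤ |∫ y in W, F y ∂μH[n]| + |∫ y in W', F y ∂μH[n]| := abs_sub _ _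
      _ ≤ 2 * (2 ^ n * hausdorffUnitBall n * R ^ (n + 1)) := by
        linarith [hF.abs_setIntegral_plane_le hW hR, hF.abs_setIntegral_plane_le hW' hR]
      _ ≤ 66 * (4 ^ n * hausdorffUnitBall n * R ^ (n + 1)) * (1 / 16) := by
        have : (2 : ℝ) ^ n ≤ 4 ^ n := by gcongr; norm_num
        have : 2 ^ n * hausdorffUnitBall n * R ^ (n + 1) ≤
          4 ^ n * hausdorffUnitBall n * R ^ (n + 1) := by gcongr
        have : 0 ≤ 4 ^ n * hausdorffUnitBall n * R ^ (n + 1) := by positivity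
        linarith
      _ ≤ 66 * (4 ^ n * hausdorffUnitBall n * R ^ (n + 1)) * α := by gcongr
      _ = 66 * 4 ^ n * hausdorffUnitBall n * R ^ (n + 1) * α := by ring
  · have hnear : ∀ y ∈ (W : Set V) ∩ closedBall x r,
        ∃ z ∈ (W' : Set V) ∩ closedBall x r, dist y z ≤ α * r := fun y hy =>
      exists_mem_dist_le_of_hausdorffDist_le (isBounded_closedBall.subset inter_subset_right)
        (isCompact_plane_inter_closedBall W' x r) hne hdist hy
    have htilt : TiltLE (4 * α) W.direction W'.direction := by
      simpa [hr.ne'] using tiltLE_of_forall_exists_dist_le hr hp hpx fun y hy =>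
        (hnear y hy).imp fun z hz => ⟨hz.1.1, hz.2⟩
    obtain ⟨p', ⟨hp', hp'x⟩, hpp'⟩ := hnear p ⟨hp, mem_closedBall.2 (by linarith)⟩
    calc |∫ y in W, F y ∂μH[n] - ∫ y in W', F y ∂μH[n]|
        ≤ 2 * ((dist p p' + 2 * (4 * α) * (4 * R)) * (hausdorffUnitBall n * (4 * R) ^ n)) :=
          htilt.abs_setIntegral_sub_le (by positivity) (by linarith) hW hW' hp hp' hR
            (by linarith) ((mem_closedBall.1 hp'x).trans hrR) hF
      _ ≤ 2 * ((α * R + 2 * (4 * α) * (4 * R)) * (hausdorffUnitBall n * (4 * R) ^ n)) := by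
          gcongr; exact hpp'.trans (by gcongr)
      _ = 66 * 4 ^ n * hausdorffUnitBall n * R ^ (n + 1) * α := by ring

end PlaneComparison

end Tilt

/-! ### Dyadic decomposition of a kernel -/

section Cutoff

variable {X : Type*} [PseudoMetricSpace X] {x y z : X} {ρ r s : ℝ}

/-- The piecewise linear function of the distance to `x` which is `1` on `B(x, ρ)` and vanishes
outside of `B(x, 2ρ)`. -/
def radialCutoff (x : X) (ρ : ℝ) (y : X) : ℝ := max 0 (min 1 (2 - dist y x / ρ))

lemma radialCutoff_nonneg (x : X) (ρ : ℝ) (y : X) : 0 ≤ radialCutoff x ρ y := le_max_left _ _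

lemma radialCutoff_le_one (x : X) (ρ : ℝ) (y : X) : radialCutoff x ρ y ≤ 1 :=
  max_le zero_le_one (min_le_left _ _)

lemma radialCutoff_eq_one (hρ : 0 < ρ) (hy : dist y x ≤ ρ) : radialCutoff x ρ y = 1 := by
  have : dist y x / ρ ≤ 1 := (div_le_one hρ).2 hy
  rw [radialCutoff, min_eq_left (by linarith), max_eq_right zero_le_one]

lemma radialCutoff_eq_zero (hρ : 0 < ρ) (hy : 2 * ρ ≤ dist y x) : radialCutoff x ρ y = 0 := by
  have : 2 ≤ dist y x / ρ := (le_div_iff₀ hρ).2 hy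
  exact max_eq_left ((min_le_right _ _).trans (by linarith))

lemma radialCutoff_mono (hs : 0 < s) (hsρ : s ≤ ρ) : radialCutoff x s y ≤ radialCutoff x ρ y := by
  unfold radialCutoff
  gcongr

lemma abs_radialCutoff_sub_le (hρ : 0 < ρ) :
    |radialCutoff x ρ y - radialCutoff x ρ z| ≤ dist y z / ρ := by
  have hdist : |dist y x - dist z x| ≤ dist y z := abs_dist_sub_le y z x
  calc |radialCutoff x ρ y - radialCutoff x ρ z|
      ≤ |min 1 (2 - dist y x / ρ) - min 1 (2 - dist z x / ρ)| := by
        simpa only [radialCutoff, max_comm (0 : ℝ)] using abs_max_sub_max_le_abs _ _ _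
    _ ≤ |(2 - dist y x / ρ) - (2 - dist z x / ρ)| := by
        simpa only [sub_self, abs_zero, sup_of_le_right (abs_nonneg _)] using
          abs_min_sub_min_le_max 1 (2 - dist y x / ρ) 1 (2 - dist z x / ρ)
    _ = |dist y x - dist z x| / ρ := by
        rw [sub_sub_sub_cancel_left, ← sub_div, abs_div, abs_of_pos hρ, abs_sub_comm]
    _ ≤ dist y z / ρ := by gcongr

lemma isLipschitzBump_mul_radialCutoff (hρ : 0 < ρ) :
    IsLipschitzBump x (2 * ρ) (fun y => ρ * radialCutoff x ρ y) where
  lipschitz := LipschitzWith.of_dist_le_mul fun y z => by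
    rw [Real.dist_eq, ← mul_sub, abs_mul, abs_of_pos hρ, NNReal.coe_one, one_mul,
      ← le_div_iff₀' hρ]
    exact abs_radialCutoff_sub_le hρ
  support_subset y hy := by
    contrapose! hy
    simp [radialCutoff_eq_zero hρ (not_le.1 hy).le]
  abs_le y := by
    rw [abs_of_nonneg (mul_nonneg hρ.le (radialCutoff_nonneg _ _ _))]
    nlinarith [radialCutoff_le_one x ρ y]

lemma mul_measureReal_closedBall_le_integral [MeasurableSpace X] [OpensMeasurableSpace X]
    {σ : Measure X} (hρ : 0 < ρ) (hσ : σ (closedBall x (2 * ρ)) ≠ ∞) :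
    ρ * σ.real (closedBall x ρ) ≤ ∫ y, ρ * radialCutoff x ρ y ∂σ :=
  calc ρ * σ.real (closedBall x ρ) = ∫ y in closedBall x ρ, ρ * radialCutoff x ρ y ∂σ := by
        rw [setIntegral_congr_fun (g := fun _ => ρ) measurableSet_closedBall fun y hy => by
          simp [radialCutoff_eq_one hρ hy], setIntegral_const, smul_eq_mul, mul_comm]
    _ ≤ ∫ y, ρ * radialCutoff x ρ y ∂σ :=
        setIntegral_le_integral ((isLipschitzBump_mul_radialCutoff hρ).integrable hσ)
          (.of_forall fun y => mul_nonneg hρ.le (radialCutoff_nonneg x ρ y))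

/-- The cutoff to the annulus `B(x, 4s) \ B(x, s)`; on dyadic radii these add up to `1` away
from `x`. -/
def annularCutoff (x : X) (s : ℝ) (y : X) : ℝ := radialCutoff x (2 * s) y - radialCutoff x s y

lemma annularCutoff_nonneg (hs : 0 < s) : 0 ≤ annularCutoff x s y :=
  sub_nonneg.2 (radialCutoff_mono hs (by linarith))

lemma annularCutoff_le_one : annularCutoff x s y ≤ 1 := by
  linarith [annularCutoff.eq_def x s y, radialCutoff_le_one x (2 * s) y, radialCutoff_nonneg x s y]

lemma annularCutoff_eq_zero_of_dist_le (hs : 0 < s) (hy : dist y x ≤ s) :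
    annularCutoff x s y = 0 := by
  rw [annularCutoff, radialCutoff_eq_one hs hy, radialCutoff_eq_one (by positivity) (by linarith),
    sub_self]

lemma annularCutoff_eq_zero_of_le_dist (hs : 0 < s) (hy : 4 * s ≤ dist y x) :
    annularCutoff x s y = 0 := by
  rw [annularCutoff, radialCutoff_eq_zero hs (by linarith),
    radialCutoff_eq_zero (by positivity) (by linarith), sub_self]

lemma abs_annularCutoff_sub_le (hs : 0 < s) :
    |annularCutoff x s y - annularCutoff x s z| ≤ 3 / 2 * (dist y z / s) :=
  calc |annularCutoff x s y - annularCutoff x s z|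
      = |(radialCutoff x (2 * s) y - radialCutoff x (2 * s) z) -
          (radialCutoff x s y - radialCutoff x s z)| := by unfold annularCutoff; ring_nf
    _ ≤ dist y z / (2 * s) + dist y z / s := (abs_sub _ _).trans
        (add_le_add (abs_radialCutoff_sub_le (by positivity)) (abs_radialCutoff_sub_le hs))
    _ = 3 / 2 * (dist y z / s) := by field_simp; ring

lemma hasSum_annularCutoff (hr : 0 < r) (hy : 2 * r ≤ dist y x) :
    HasSum (fun k : ℕ => annularCutoff x (2 ^ k * r) y) 1 := by
  rw [hasSum_iff_tendsto_nat_of_nonneg fun k => annularCutoff_nonneg (by positivity)]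
  have htelescope (N : ℕ) : ∑ k ∈ Finset.range N, annularCutoff x (2 ^ k * r) y =
      radialCutoff x (2 ^ N * r) y := by
    have h := Finset.sum_range_sub (fun k => radialCutoff x (2 ^ k * r) y) N
    simp only [pow_zero, one_mul, radialCutoff_eq_zero hr hy, sub_zero] at h
    rw [← h]
    simp only [annularCutoff, pow_succ', mul_assoc]
  obtain ⟨N, hN⟩ := pow_unbounded_of_one_lt (dist y x / r) one_lt_two
  refine tendsto_atTop_of_eventually_const (i₀ := N) fun m hm => ?_
  rw [htelescope, radialCutoff_eq_one (by positivity)]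
  rw [div_lt_iff₀ hr] at hN
  exact hN.le.trans (by gcongr; norm_num)

end Cutoff

/-- The size and smoothness conditions on a kernel `K = S(x, ·)` with pole `x`: size
`A |x - y|^{-a}` and smoothness in `y` of the corresponding order. -/
structure IsCZKernelAt {X : Type*} [PseudoMetricSpace X] (x : X) (a A : ℝ) (K : X → ℝ) :
    Prop where
  abs_le : ∀ y, x ≠ y → |K y| ≤ A / dist x y ^ a
  abs_sub_le : ∀ y z, x ≠ y → dist y z ≤ dist x y / 2 →
    |K y - K z| ≤ A * dist y z / dist x y ^ (a + 1)

namespace IsCZKernelAt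

variable {X : Type*} [PseudoMetricSpace X] {x y z : X} {a A s : ℝ} {K : X → ℝ}

lemma abs_le_of_le_dist (hK : IsCZKernelAt x a A K) (ha : 0 ≤ a) (hA : 0 ≤ A) (hs : 0 < s)
    (hy : s ≤ dist y x) : |K y| ≤ A / s ^ a := by
  rw [dist_comm] at hy
  refine (hK.abs_le y ?_).trans (by gcongr)
  rintro rfl
  exact (hs.trans_le hy).ne' (dist_self x)

lemma abs_mul_annularCutoff_le (hK : IsCZKernelAt x a A K) (ha : 0 ≤ a) (hA : 0 ≤ A)
    (hs : 0 < s) (y : X) : |K y * annularCutoff x s y| ≤ A / s ^ a := by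
  rcases le_total (dist y x) s with hy | hy
  · rw [annularCutoff_eq_zero_of_dist_le hs hy, mul_zero, abs_zero]
    positivity
  · rw [abs_mul, abs_of_nonneg (annularCutoff_nonneg hs)]
    exact (mul_le_of_le_one_right (abs_nonneg _) annularCutoff_le_one).trans
      (hK.abs_le_of_le_dist ha hA hs hy)

lemma abs_mul_annularCutoff_sub_le_of_le_dist (hK : IsCZKernelAt x a A K) (ha : 0 ≤ a)
    (hA : 0 ≤ A) (hs : 0 < s) (hy : s ≤ dist y x) :
    |K y * annularCutoff x s y - K z * annularCutoff x s z| ≤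
      4 * A / s ^ (a + 1) * dist y z := by
  have hpow : s ^ (a + 1) = s ^ a * s := Real.rpow_add_one hs.ne' a
  have hxy : s ≤ dist x y := by rwa [dist_comm]
  rcases le_or_gt (dist y z) (dist x y / 2) with hz | hz
  · have hne : x ≠ y := by
      rintro rfl
      exact (hs.trans_le hy).ne' (dist_self x)
    have hKy : |K y| ≤ A / s ^ a := hK.abs_le_of_le_dist ha hA hs hy
    have hKyz : |K y - K z| ≤ A * dist y z / s ^ (a + 1) :=
      (hK.abs_sub_le y z hne hz).trans (by gcongr)
    calc |K y * annularCutoff x s y - K z * annularCutoff x s z|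
        = |K y * (annularCutoff x s y - annularCutoff x s z) +
            (K y - K z) * annularCutoff x s z| := by ring_nf
      _ ≤ |K y| * |annularCutoff x s y - annularCutoff x s z| + |K y - K z| * 1 := by
        refine (abs_add_le _ _).trans ?_
        rw [abs_mul, abs_mul, abs_of_nonneg (annularCutoff_nonneg hs (y := z))]
        gcongr
        exact annularCutoff_le_one
      _ ≤ A / s ^ a * (3 / 2 * (dist y z / s)) + A * dist y z / s ^ (a + 1) * 1 := by
        gcongr
        exact abs_annularCutoff_sub_le hs
      _ = 5 / 2 * (A / s ^ (a + 1) * dist y z) := by rw [hpow]; field_simp; ring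
      _ ≤ 4 * (A / s ^ (a + 1) * dist y z) := by gcongr; norm_num
      _ = 4 * A / s ^ (a + 1) * dist y z := by ring
  · calc |K y * annularCutoff x s y - K z * annularCutoff x s z|
        ≤ A / s ^ a + A / s ^ a := (abs_sub _ _).trans
          (add_le_add (hK.abs_mul_annularCutoff_le ha hA hs y)
            (hK.abs_mul_annularCutoff_le ha hA hs z))
      _ = 4 * A / s ^ (a + 1) * (s / 2) := by rw [hpow]; field_simp; ring
      _ ≤ 4 * A / s ^ (a + 1) * dist y z := by gcongr; linarith

lemma abs_mul_annularCutoff_sub_le (hK : IsCZKernelAt x a A K) (ha : 0 ≤ a) (hA : 0 ≤ A)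
    (hs : 0 < s) (y z : X) :
    |K y * annularCutoff x s y - K z * annularCutoff x s z| ≤
      4 * A / s ^ (a + 1) * dist y z := by
  rcases le_total s (dist y x) with hy | hy
  · exact hK.abs_mul_annularCutoff_sub_le_of_le_dist ha hA hs hy
  rcases le_total s (dist z x) with hz | hz
  · rw [abs_sub_comm, dist_comm y]
    exact hK.abs_mul_annularCutoff_sub_le_of_le_dist ha hA hs hz
  · rw [annularCutoff_eq_zero_of_dist_le hs hy, annularCutoff_eq_zero_of_dist_le hs hz]
    simp only [mul_zero, sub_self, abs_zero]
    positivity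

lemma isLipschitzBump_mul_annularCutoff (hK : IsCZKernelAt x a A K) (ha : 0 ≤ a) (hA : 0 < A)
    (hs : 0 < s) :
    IsLipschitzBump x (4 * s) fun y => s ^ (a + 1) / (4 * A) * (K y * annularCutoff x s y) where
  lipschitz := LipschitzWith.of_dist_le_mul fun y z => by
    rw [Real.dist_eq, ← mul_sub, abs_mul, abs_of_pos (by positivity)]
    calc s ^ (a + 1) / (4 * A) * |K y * annularCutoff x s y - K z * annularCutoff x s z|
        ≤ s ^ (a + 1) / (4 * A) * (4 * A / s ^ (a + 1) * dist y z) := by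
          gcongr; exact hK.abs_mul_annularCutoff_sub_le ha hA.le hs y z
      _ = (1 : ℝ≥0) * dist y z := by rw [NNReal.coe_one]; field_simp
  support_subset y hy := by
    contrapose! hy
    simp [annularCutoff_eq_zero_of_le_dist hs (not_le.1 hy).le]
  abs_le y := by
    rw [abs_mul, abs_of_pos (by positivity)]
    calc s ^ (a + 1) / (4 * A) * |K y * annularCutoff x s y|
        ≤ s ^ (a + 1) / (4 * A) * (A / s ^ a) := by
          gcongr; exact hK.abs_mul_annularCutoff_le ha hA.le hs y
      _ = s / 4 := by rw [Real.rpow_add_one hs.ne']; field_simp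
      _ ≤ 4 * s := by linarith

variable [MeasurableSpace X] {σ : Measure X} {n : ℕ} {β Q r : ℝ}

lemma integral_abs_mul_annularCutoff_le (hK : IsCZKernelAt x (n + β) A K) (hβ : 0 < β)
    (hA : 0 < A) (hs : 0 < s) (hfin : σ (closedBall x (4 * s)) ≠ ∞)
    (hgrowth : σ.real (closedBall x (4 * s)) ≤ Q * s ^ n) :
    ∫ y, |K y * annularCutoff x s y| ∂σ ≤ A * Q * s ^ (-β) := by
  have ha : 0 ≤ n + β := by positivity
  have hsupp : (Function.support fun y => K y * annularCutoff x s y) ⊆ closedBall x (4 * s) :=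
    fun y hy => by
      contrapose! hy
      simp [annularCutoff_eq_zero_of_le_dist hs (not_le.1 hy).le]
  calc ∫ y, |K y * annularCutoff x s y| ∂σ
      ≤ A / s ^ (n + β) * σ.real (closedBall x (4 * s)) :=
        integral_abs_le_of_support_subset hfin hsupp (hK.abs_mul_annularCutoff_le ha hA.le hs)
    _ ≤ A / s ^ (n + β) * (Q * s ^ n) := by gcongr
    _ = A * Q * s ^ (-β) := by
        rw [Real.rpow_add hs, Real.rpow_natCast, Real.rpow_neg hs.le]; field_simp

variable [OpensMeasurableSpace X]

lemma integrable_mul_annularCutoff (hK : IsCZKernelAt x a A K) (ha : 0 ≤ a) (hA : 0 < A)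
    (hs : 0 < s) (hσ : σ (closedBall x (4 * s)) ≠ ∞) :
    Integrable (fun y => K y * annularCutoff x s y) σ := by
  have hc : s ^ (a + 1) / (4 * A) ≠ 0 := by positivity
  exact (integrable_const_mul_iff hc.isUnit _).1
    ((hK.isLipschitzBump_mul_annularCutoff ha hA hs).integrable hσ)

lemma hasSum_integral_mul_annularCutoff (hK : IsCZKernelAt x (n + β) A K)
    (hβ : 0 < β) (hA : 0 < A) (hr : 0 < r)
    (hfin : ∀ k : ℕ, σ (closedBall x (4 * (2 ^ k * r))) ≠ ∞)
    (hgrowth : ∀ k : ℕ, σ.real (closedBall x (4 * (2 ^ k * r))) ≤ Q * (2 ^ k * r) ^ n)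
    (hfar : ∀ᵐ y ∂σ, 2 * r ≤ dist y x) :
    HasSum (fun k : ℕ => ∫ y, K y * annularCutoff x (2 ^ k * r) y ∂σ) (∫ y, K y ∂σ) := by
  have hbound (k : ℕ) : ∫ y, ‖K y * annularCutoff x (2 ^ k * r) y‖ ∂σ ≤
      A * Q * r ^ (-β) * (2 ^ (-β)) ^ k :=
    calc ∫ y, ‖K y * annularCutoff x (2 ^ k * r) y‖ ∂σ ≤ A * Q * (2 ^ k * r) ^ (-β) :=
          hK.integral_abs_mul_annularCutoff_le hβ hA (by positivity) (hfin k) (hgrowth k)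
      _ = A * Q * r ^ (-β) * (2 ^ (-β)) ^ k := by
          rw [Real.mul_rpow (by positivity) hr.le, Real.rpow_pow_comm two_pos.le]
          ring
  have hq : (2 : ℝ) ^ (-β) < 1 := Real.rpow_lt_one_of_one_lt_of_neg one_lt_two (by linarith)
  have hsummable : Summable fun k : ℕ => ∫ y, ‖K y * annularCutoff x (2 ^ k * r) y‖ ∂σ :=
    .of_nonneg_of_le (fun k => by positivity) hbound
      ((summable_geometric_of_lt_one (by positivity) hq).mul_left _)
  have hpointwise : ∀ᵐ y ∂σ, ∑' k : ℕ, K y * annularCutoff x (2 ^ k * r) y = K y := by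
    filter_upwards [hfar] with y hy
    simpa using ((hasSum_annularCutoff hr hy).mul_left (K y)).tsum_eq
  rw [← integral_congr_ae hpointwise]
  exact hasSum_integral_of_summable_integral_norm
    (fun k => hK.integrable_mul_annularCutoff (by positivity) hA (by positivity) (hfin k)) hsummable

end IsCZKernelAt

lemma hasSum_integral_plane_mul_annularCutoff {V : Type*} [NormedAddCommGroup V]
    [InnerProductSpace ℝ V] [MeasurableSpace V] [BorelSpace V] {n : ℕ} {x : V}
    {W : AffineSubspace ℝ V} [FiniteDimensional ℝ W.direction] {r β A : ℝ} {K : V → ℝ}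
    (hW : Module.finrank ℝ W.direction = n) (hr : 0 < r) (hβ : 0 < β) (hA : 0 < A)
    (hK : IsCZKernelAt x (n + β) A K) (hfar : ∀ y ∈ W, 2 * r ≤ dist y x) :
    HasSum (fun k : ℕ => ∫ y in W, K y * annularCutoff x (2 ^ k * r) y ∂μH[n])
      (∫ y in W, K y ∂μH[n]) := by
  refine hK.hasSum_integral_mul_annularCutoff (Q := 8 ^ n * hausdorffUnitBall n) hβ hA hr
    (fun k => hausdorffMeasure_restrict_plane_closedBall_ne_top hW x (by positivity))
    (fun k => ?_)
    (ae_restrict_of_forall_mem W.closed_of_finiteDimensional.measurableSet hfar)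
  refine (measureReal_restrict_plane_closedBall_le hW x (by positivity)).trans_eq ?_
  rw [← mul_assoc 2 4, mul_pow (2 * 4 : ℝ)]
  norm_num
  ring

lemma hasSum_pow_mul_sum_range {q : ℝ} (hq₀ : 0 ≤ q) (hq : q < 1) {α : ℕ → ℝ}
    (hα : Summable fun k => q ^ k * α k) :
    HasSum (fun k => q ^ k * ∑ i ∈ Finset.range (k + 1), α i)
      ((∑' k, q ^ k * α k) * (1 - q)⁻¹) := by
  have hgeom : Summable fun k => ‖q ^ k‖ := by
    simpa [abs_of_nonneg hq₀] using summable_geometric_of_lt_one hq₀ hq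
  have hcauchy (k : ℕ) : q ^ k * ∑ i ∈ Finset.range (k + 1), α i =
      ∑ i ∈ Finset.range (k + 1), q ^ i * α i * q ^ (k - i) := by
    rw [Finset.mul_sum]
    refine Finset.sum_congr rfl fun i hi => ?_
    rw [mul_right_comm, pow_mul_pow_sub q (Finset.mem_range_succ_iff.1 hi)]
  simp_rw [hcauchy, ← tsum_geometric_of_lt_one hq₀ hq]
  exact hasSum_sum_range_mul_of_summable_norm hα.norm hgeom

lemma two_rpow_neg_pow (β : ℝ) (k : ℕ) : ((2 : ℝ) ^ (-β)) ^ k = 2 ^ (-(k : ℝ) * β) := by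
  rw [← Real.rpow_natCast, ← Real.rpow_mul two_pos.le]
  congr 1
  ring

/-! ### Multiscale flat approximation -/

section Multiscale

variable {V : Type*} [NormedAddCommGroup V] [InnerProductSpace ℝ V] [MeasurableSpace V]
  [BorelSpace V]

/-- Flatness of `μ` around `x` at all scales above `ℓ`: in the ball of radius `2 ^ (k + 1) * ℓ`, the
measure `μ` is within relative error `α k` of `c k` times the Hausdorff measure on the `n`-plane
`L k`, and consecutive densities and planes are close to each other. -/
structure IsMultiscaleFlat (n : ℕ) (μ : Measure V) (x : V) (ℓ C₀ : ℝ)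
    (L : ℕ → AffineSubspace ℝ V) (c α : ℕ → ℝ) : Prop where
  finiteDimensional : ∀ k, FiniteDimensional ℝ (L k).direction
  finrank_direction : ∀ k, Module.finrank ℝ (L k).direction = n
  inter_nonempty : ∀ k, ((L k : Set V) ∩ closedBall x (2 ^ k * ℓ)).Nonempty
  density_mem : ∀ k, c k ∈ Icc 0 C₀
  error_mem : ∀ k, α k ∈ Icc 0 1
  abs_integral_sub_le : ∀ k F, IsLipschitzBump x (2 ^ (k + 1) * ℓ) F →
    |∫ y, F y ∂μ - c k * ∫ y in L k, F y ∂μH[n]| ≤ α k * (2 ^ k * ℓ) ^ (n + 1)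
  abs_density_sub_le : ∀ k, |c (k + 1) - c k| ≤ α (k + 1)
  hausdorffDist_le : ∀ k, hausdorffDist ((L k : Set V) ∩ closedBall x (2 ^ (k + 1) * ℓ))
    ((L (k + 1) : Set V) ∩ closedBall x (2 ^ (k + 1) * ℓ)) ≤ α (k + 1) * 2 ^ (k + 1) * ℓ

/-- The constant in the comparison of two consecutive flat measures of a multiscale flat
approximation: the first term comes from the densities, the second one from the planes. -/
def flatStepConst (n : ℕ) (C₀ : ℝ) : ℝ :=
  2 ^ n * hausdorffUnitBall n + C₀ * (66 * 4 ^ n * hausdorffUnitBall n)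

lemma flatStepConst_nonneg (n : ℕ) {C₀ : ℝ} (hC₀ : 0 ≤ C₀) : 0 ≤ flatStepConst n C₀ := by
  have := hausdorffUnitBall_nonneg n
  unfold flatStepConst
  positivity

/-- The growth constant of a measure admitting a multiscale flat approximation. -/
def flatGrowthConst (n : ℕ) (C₀ : ℝ) : ℝ := 2 * 4 ^ n * C₀ * hausdorffUnitBall n + 1

namespace IsMultiscaleFlat

variable {n : ℕ} {μ : Measure V} {x : V} {ℓ C₀ : ℝ} {L : ℕ → AffineSubspace ℝ V} {c α : ℕ → ℝ}
  {F : V → ℝ} {R : ℝ}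

lemma bound_nonneg (h : IsMultiscaleFlat n μ x ℓ C₀ L c α) : 0 ≤ C₀ :=
  (h.density_mem 0).1.trans (h.density_mem 0).2

lemma abs_flatIntegral_le (h : IsMultiscaleFlat n μ x ℓ C₀ L c α) (k : ℕ) (hR : 0 ≤ R)
    (hF : IsLipschitzBump x R F) :
    |c k * ∫ y in L k, F y ∂μH[n]| ≤ C₀ * (2 ^ n * hausdorffUnitBall n * R ^ (n + 1)) := by
  have := h.finiteDimensional k
  rw [abs_mul, abs_of_nonneg (h.density_mem k).1]
  exact mul_le_mul (h.density_mem k).2 (hF.abs_setIntegral_plane_le (h.finrank_direction k) hR)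
    (abs_nonneg _) h.bound_nonneg

lemma measureReal_closedBall_le (h : IsMultiscaleFlat n μ x ℓ C₀ L c α) (hℓ : 0 < ℓ)
    (hfin : ∀ r, μ (closedBall x r) ≠ ∞) (k : ℕ) :
    μ.real (closedBall x (2 ^ k * ℓ)) ≤ flatGrowthConst n C₀ * (2 ^ k * ℓ) ^ n := by
  obtain ⟨ρ, hρℓ⟩ : ∃ ρ, ρ = 2 ^ k * ℓ := ⟨_, rfl⟩
  rw [← hρℓ]
  have hρ : 0 < ρ := hρℓ ▸ by positivity
  set F : V → ℝ := fun y => ρ * radialCutoff x ρ y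
  have hF : IsLipschitzBump x (2 * ρ) F := isLipschitzBump_mul_radialCutoff hρ
  have hplane := h.abs_flatIntegral_le k (by positivity) hF
  have happrox : |∫ y, F y ∂μ - c k * ∫ y in L k, F y ∂μH[n]| ≤ ρ ^ (n + 1) :=
    (h.abs_integral_sub_le k F (hF.mono (by rw [hρℓ, pow_succ']; linarith))).trans <| by
      rw [← hρℓ]
      exact mul_le_of_le_one_left (by positivity) (h.error_mem k).2
  refine le_of_mul_le_mul_left ?_ hρ
  calc ρ * μ.real (closedBall x ρ) ≤ ∫ y, F y ∂μ :=
        mul_measureReal_closedBall_le_integral hρ (hfin _)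
    _ ≤ C₀ * (2 ^ n * hausdorffUnitBall n * (2 * ρ) ^ (n + 1)) + ρ ^ (n + 1) := by
        linarith [le_of_abs_le hplane, le_of_abs_le happrox]
    _ = ρ * (flatGrowthConst n C₀ * ρ ^ n) := by
        have h4 : (4 : ℝ) ^ n = 2 ^ n * 2 ^ n := by rw [← mul_pow]; norm_num
        rw [flatGrowthConst, h4]
        ring

lemma abs_flatIntegral_succ_sub_le (h : IsMultiscaleFlat n μ x ℓ C₀ L c α) (hℓ : 0 < ℓ) (k : ℕ)
    (hR : 2 ^ (k + 1) * ℓ ≤ R) (hF : IsLipschitzBump x R F) :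
    |c (k + 1) * ∫ y in L (k + 1), F y ∂μH[n] - c k * ∫ y in L k, F y ∂μH[n]| ≤
      flatStepConst n C₀ * R ^ (n + 1) * α (k + 1) := by
  have := h.finiteDimensional
  have := hausdorffUnitBall_nonneg n
  have hα := (h.error_mem (k + 1)).1
  have hC₀ := h.bound_nonneg
  have hr : 0 < 2 ^ (k + 1) * ℓ := by positivity
  have hR₀ : 0 ≤ R := hr.le.trans hR
  obtain ⟨p, hp, hpx⟩ := h.inter_nonempty k
  have hplanes : |∫ y in L k, F y ∂μH[n] - ∫ y in L (k + 1), F y ∂μH[n]| ≤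
      66 * 4 ^ n * hausdorffUnitBall n * R ^ (n + 1) * α (k + 1) :=
    abs_setIntegral_plane_sub_le_of_hausdorffDist_le (h.finrank_direction k)
      (h.finrank_direction (k + 1)) hr hR hp
      ((mem_closedBall.1 hpx).trans_eq (by rw [pow_succ]; ring)) (h.inter_nonempty (k + 1)) hα
      ((h.hausdorffDist_le k).trans_eq (mul_assoc _ _ _)) hF
  set I₀ := ∫ y in L k, F y ∂μH[n]
  set I₁ := ∫ y in L (k + 1), F y ∂μH[n]
  calc |c (k + 1) * I₁ - c k * I₀| = |(c (k + 1) - c k) * I₁ - c k * (I₀ - I₁)| := by ring_nf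
    _ ≤ |c (k + 1) - c k| * |I₁| + c k * |I₀ - I₁| := by
      refine (abs_sub _ _).trans_eq ?_
      rw [abs_mul, abs_mul, abs_of_nonneg (h.density_mem k).1]
    _ ≤ α (k + 1) * (2 ^ n * hausdorffUnitBall n * R ^ (n + 1)) +
        C₀ * (66 * 4 ^ n * hausdorffUnitBall n * R ^ (n + 1) * α (k + 1)) := by
      gcongr
      · exact h.abs_density_sub_le k
      · exact hF.abs_setIntegral_plane_le (h.finrank_direction (k + 1)) hR₀
      · exact (h.density_mem k).2
    _ = flatStepConst n C₀ * R ^ (n + 1) * α (k + 1) := by rw [flatStepConst]; ring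

lemma abs_integral_sub_flatIntegral_zero_le (h : IsMultiscaleFlat n μ x ℓ C₀ L c α)
    (hℓ : 0 < ℓ) (k : ℕ) (hF : IsLipschitzBump x (2 ^ (k + 1) * ℓ) F) :
    |∫ y, F y ∂μ - c 0 * ∫ y in L 0, F y ∂μH[n]| ≤
      (flatStepConst n C₀ + 1) * (2 ^ (k + 1) * ℓ) ^ (n + 1) *
        ∑ i ∈ Finset.range (k + 1), α i := by
  set R := 2 ^ (k + 1) * ℓ
  set M := flatStepConst n C₀
  set I : ℕ → ℝ := fun j => c j * ∫ y in L j, F y ∂μH[n]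
  have : 0 < R := by positivity
  have hM : 0 ≤ M := flatStepConst_nonneg n h.bound_nonneg
  have hα (j : ℕ) : 0 ≤ α j := (h.error_mem j).1
  have hlast : |∫ y, F y ∂μ - I k| ≤ R ^ (n + 1) * α k :=
    (h.abs_integral_sub_le k F hF).trans (by
      rw [mul_comm]
      gcongr
      · exact hα k
      · simp only [R]
        gcongr <;> simp)
  have htelescope : |I 0 - I k| ≤ ∑ j ∈ Finset.range k, M * R ^ (n + 1) * α (j + 1) :=
    dist_le_range_sum_of_dist_le (f := I) k fun {j} hj => by
      rw [Real.dist_eq, abs_sub_comm]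
      refine h.abs_flatIntegral_succ_sub_le hℓ j ?_ hF
      simp only [R]
      gcongr
      exact one_le_two
  calc |∫ y, F y ∂μ - I 0| ≤ |∫ y, F y ∂μ - I k| + |I 0 - I k| := by
        rw [abs_sub_comm (I 0)]; exact abs_sub_le _ _ _
    _ ≤ R ^ (n + 1) * α k + ∑ j ∈ Finset.range k, M * R ^ (n + 1) * α (j + 1) :=
        add_le_add hlast htelescope
    _ ≤ R ^ (n + 1) * ∑ i ∈ Finset.range (k + 1), α i +
          M * R ^ (n + 1) * ∑ i ∈ Finset.range (k + 1), α i := by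
        rw [← Finset.mul_sum]
        gcongr
        · exact Finset.single_le_sum (fun i _ => hα i) (Finset.self_mem_range_succ k)
        · rw [Finset.sum_range_succ']
          exact le_add_of_nonneg_right (hα 0)
    _ = (M + 1) * R ^ (n + 1) * ∑ i ∈ Finset.range (k + 1), α i := by ring

variable {κ β A : ℝ} {K : V → ℝ}

lemma abs_integral_mul_annularCutoff_sub_le (h : IsMultiscaleFlat n μ x ℓ C₀ L c α)
    (hℓ : 0 < ℓ) (hκ : 0 < κ) (hκ' : κ ≤ 1 / 2) (hβ : 0 < β) (hA : 0 < A)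
    (hK : IsCZKernelAt x (n + β) A K) (k : ℕ) :
    |∫ y, K y * annularCutoff x (2 ^ k * (κ * ℓ)) y ∂μ -
        c 0 * ∫ y in L 0, K y * annularCutoff x (2 ^ k * (κ * ℓ)) y ∂μH[n]| ≤
      4 * A * (flatStepConst n C₀ + 1) * (2 / κ) ^ (n + 1) * (κ * ℓ) ^ (-β) *
        ((2 ^ (-β)) ^ k * ∑ i ∈ Finset.range (k + 1), α i) := by
  set s := 2 ^ k * (κ * ℓ) with hs_def
  set M := flatStepConst n C₀ + 1
  have hs : 0 < s := by positivity
  have hscale : 2 ^ (k + 1) * ℓ = 2 / κ * s := by rw [hs_def]; field_simp; ring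
  set F : V → ℝ := fun y => s ^ (n + β + 1) / (4 * A) * (K y * annularCutoff x s y)
  have hF : IsLipschitzBump x (2 ^ (k + 1) * ℓ) F :=
    (hK.isLipschitzBump_mul_annularCutoff (by positivity) hA hs).mono (by
      rw [hscale]
      gcongr
      rw [le_div_iff₀ hκ]
      linarith)
  have hKF : (fun y => K y * annularCutoff x s y) =
      fun y => 4 * A / s ^ (n + β + 1) * F y := by
    funext y
    simp only [F]
    field_simp
  simp only [hKF, integral_const_mul]
  have hpow : s ^ (n + 1) / s ^ (n + β + 1) = (κ * ℓ) ^ (-β) * (2 ^ (-β)) ^ k := by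
    rw [add_right_comm, Real.rpow_add hs, ← Nat.cast_add_one, Real.rpow_natCast,
      div_mul_cancel_left₀ (by positivity), ← Real.rpow_neg hs.le, hs_def,
      Real.mul_rpow (by positivity) (by positivity), Real.rpow_pow_comm two_pos.le, mul_comm]
  calc |4 * A / s ^ (n + β + 1) * ∫ y, F y ∂μ -
        c 0 * (4 * A / s ^ (n + β + 1) * ∫ y in L 0, F y ∂μH[n])|
      = 4 * A / s ^ (n + β + 1) * |∫ y, F y ∂μ - c 0 * ∫ y in L 0, F y ∂μH[n]| := by
        rw [mul_left_comm, ← mul_sub, abs_mul, abs_of_pos (by positivity)]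
    _ ≤ 4 * A / s ^ (n + β + 1) *
          (M * (2 / κ * s) ^ (n + 1) * ∑ i ∈ Finset.range (k + 1), α i) := by
        rw [← hscale]
        gcongr
        exact h.abs_integral_sub_flatIntegral_zero_le hℓ k hF
    _ = 4 * A * M * (2 / κ) ^ (n + 1) * (s ^ (n + 1) / s ^ (n + β + 1)) *
          ∑ i ∈ Finset.range (k + 1), α i := by rw [mul_pow]; ring
    _ = 4 * A * M * (2 / κ) ^ (n + 1) * (κ * ℓ) ^ (-β) *
          ((2 ^ (-β)) ^ k * ∑ i ∈ Finset.range (k + 1), α i) := by rw [hpow]; ring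

lemma hasSum_integral_mul_annularCutoff (h : IsMultiscaleFlat n μ x ℓ C₀ L c α)
    (hℓ : 0 < ℓ) (hκ : 0 < κ) (hκ' : κ ≤ 1 / 2) (hβ : 0 < β) (hA : 0 < A)
    (hK : IsCZKernelAt x (n + β) A K) (hfin : ∀ r, μ (closedBall x r) ≠ ∞)
    (hfar : ∀ᵐ y ∂μ, 2 * (κ * ℓ) ≤ dist y x) :
    HasSum (fun k : ℕ => ∫ y, K y * annularCutoff x (2 ^ k * (κ * ℓ)) y ∂μ) (∫ y, K y ∂μ) := by
  refine hK.hasSum_integral_mul_annularCutoff (Q := flatGrowthConst n C₀ * (2 / κ) ^ n) hβ hA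
    (by positivity) (fun k => hfin _) (fun k => ?_) hfar
  calc μ.real (closedBall x (4 * (2 ^ k * (κ * ℓ)))) ≤ μ.real (closedBall x (2 ^ (k + 1) * ℓ)) := by
        refine measureReal_mono (closedBall_subset_closedBall ?_) (hfin _)
        calc 4 * (2 ^ k * (κ * ℓ)) ≤ 4 * (2 ^ k * (1 / 2 * ℓ)) := by gcongr
          _ = 2 ^ (k + 1) * ℓ := by ring
    _ ≤ flatGrowthConst n C₀ * (2 ^ (k + 1) * ℓ) ^ n := h.measureReal_closedBall_le hℓ hfin (k + 1)
    _ = flatGrowthConst n C₀ * (2 / κ) ^ n * (2 ^ k * (κ * ℓ)) ^ n := by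
        rw [mul_assoc, ← mul_pow]; congr 2; field_simp; ring

theorem abs_integral_sub_le_tsum (h : IsMultiscaleFlat n μ x ℓ C₀ L c α)
    (hℓ : 0 < ℓ) (hκ : 0 < κ) (hκ' : κ ≤ 1 / 2) (hβ : 0 < β) (hA : 0 < A)
    (hK : IsCZKernelAt x (n + β) A K) (hfin : ∀ r, μ (closedBall x r) ≠ ∞)
    (hμ : ∀ᵐ y ∂μ, 2 * (κ * ℓ) ≤ dist y x) (hL : ∀ y ∈ L 0, 2 * (κ * ℓ) ≤ dist y x) :
    |∫ y, K y ∂μ - c 0 * ∫ y in L 0, K y ∂μH[n]| ≤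
      4 * A * (flatStepConst n C₀ + 1) * (2 / κ) ^ (n + 1) * (κ * ℓ) ^ (-β) *
        ((∑' k : ℕ, (2 ^ (-β)) ^ k * α k) * (1 - 2 ^ (-β))⁻¹) := by
  have := h.finiteDimensional 0
  have hq₀ : (0 : ℝ) ≤ 2 ^ (-β) := by positivity
  have hq : (2 : ℝ) ^ (-β) < 1 := Real.rpow_lt_one_of_one_lt_of_neg one_lt_two (by linarith)
  have hsummable : Summable fun k => ((2 : ℝ) ^ (-β)) ^ k * α k :=
    .of_nonneg_of_le (fun k => mul_nonneg (by positivity) (h.error_mem k).1)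
      (fun k => mul_le_of_le_one_right (by positivity) (h.error_mem k).2)
      (summable_geometric_of_lt_one hq₀ hq)
  exact HasSum.norm_le_of_bounded
    ((h.hasSum_integral_mul_annularCutoff hℓ hκ hκ' hβ hA hK hfin hμ).sub
      ((hasSum_integral_plane_mul_annularCutoff (h.finrank_direction 0) (by positivity) hβ hA hK
        hL).mul_left (c 0)))
    ((hasSum_pow_mul_sum_range hq₀ hq hsummable).mul_left _)
    (h.abs_integral_mul_annularCutoff_sub_le hℓ hκ hκ' hβ hA hK)

end IsMultiscaleFlat

end Multiscale

theorem statement10_general.{u} (n : ℕ) (β A C₀ c₁ : ℝ) (hβ : 0 < β) (hA : 0 < A)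
    (hC₀ : 0 ≤ C₀) (hc₁ : 0 < c₁) :
    ∃ C : ℝ, 0 < C ∧
      ∀ (V : Type u) [NormedAddCommGroup V] [InnerProductSpace ℝ V] [MeasurableSpace V]
        [BorelSpace V] (μ : Measure V) (x : V) (ℓ : ℝ) (K : V → ℝ)
        (L : ℕ → AffineSubspace ℝ V) (c α : ℕ → ℝ),
        0 < ℓ → (∀ᵐ y ∂μ, ℓ ≤ dist y x) → (∀ r, μ (closedBall x r) ≠ ∞) →
        IsCZKernelAt x (n + β) A K → IsMultiscaleFlat n μ x ℓ C₀ L c α →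
        c₁ * ℓ ≤ infDist x (L 0) →
        |∫ y, K y ∂μ - c 0 * ∫ y in L 0, K y ∂μH[n]| ≤
          C * ℓ ^ (-β) * ∑' k : ℕ, (2 : ℝ) ^ (-(k : ℝ) * β) * α k := by
  obtain ⟨κ, hκ, hκc₁, hκ_half⟩ : ∃ κ, 0 < κ ∧ 2 * κ ≤ c₁ ∧ κ ≤ 1 / 2 :=
    ⟨min c₁ 1 / 2, half_pos (lt_min hc₁ one_pos), by linarith [min_le_left c₁ 1],
      by linarith [min_le_right c₁ 1]⟩
  have hM := flatStepConst_nonneg n hC₀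
  have hq : (2 : ℝ) ^ (-β) < 1 := Real.rpow_lt_one_of_one_lt_of_neg one_lt_two (by linarith)
  refine ⟨4 * A * (flatStepConst n C₀ + 1) * (2 / κ) ^ (n + 1) * κ ^ (-β) * (1 - 2 ^ (-β))⁻¹,
    mul_pos (by positivity) (inv_pos.2 (sub_pos.2 hq)), ?_⟩
  intro V _ _ _ _ μ x ℓ K L c α hℓ hμ hfin hK h hL
  have hμκ : ∀ᵐ y ∂μ, 2 * (κ * ℓ) ≤ dist y x := by
    filter_upwards [hμ] with y hy
    nlinarith
  have hLκ : ∀ y ∈ L 0, 2 * (κ * ℓ) ≤ dist y x := fun y hy => by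
    have := hL.trans (infDist_le_dist_of_mem hy)
    rw [dist_comm]
    nlinarith
  refine (h.abs_integral_sub_le_tsum hℓ hκ hκ_half hβ hA hK hfin hμκ hLκ).trans_eq ?_
  simp only [two_rpow_neg_pow, Real.mul_rpow hκ.le hℓ.le]
  ring

/-! ### Ahlfors–David regular measures -/

section ADR

variable {d n : ℕ} {μ : Measure (Euc d)} {C : ℝ} {E : Set (Euc d)} {x : Euc d}

lemma msupport_eq_support (μ : Measure (Euc d)) : msupport μ = μ.support := by
  ext x
  exact (nhds_basis_ball.mem_measureSupport).symm

lemma infDist_msupport_pos (hne : (msupport μ).Nonempty) (hx : x ∉ msupport μ) :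
    0 < infDist x (msupport μ) := by
  rw [msupport_eq_support] at hne hx ⊢
  exact (Measure.isClosed_support.notMem_iff_infDist_pos hne).1 hx

lemma ae_infDist_msupport_le_dist (μ : Measure (Euc d)) (x : Euc d) :
    ∀ᵐ y ∂μ, infDist x (msupport μ) ≤ dist y x := by
  rw [msupport_eq_support]
  filter_upwards [Measure.support_mem_ae] with y hy
  exact dist_comm x y ▸ infDist_le_dist_of_mem hy

lemma IsADRWith.nonempty (h : IsADRWith n C μ E) : E.Nonempty :=
  nonempty_iff_ne_empty.2 fun hE => h.2.2.1 (hE ▸ Bornology.isBounded_empty)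

lemma IsADRWith.measure_closedBall_ne_top (h : IsADRWith n C μ E) (x : Euc d) (r : ℝ) :
    μ (closedBall x r) ≠ ∞ := by
  obtain ⟨z, hz⟩ := h.nonempty
  have hsub : closedBall x r ⊆ closedBall z (max 1 (r + dist x z)) :=
    closedBall_subset_closedBall' (le_max_right _ _)
  exact (((measure_mono hsub).trans (h.2.2.2 z hz _ (by positivity)).2).trans_lt
    ENNReal.ofReal_lt_top).ne

lemma IsCZKernel.isCZKernelAt {β A : ℝ} {S : Euc d → Euc d → ℝ} (hS : IsCZKernel n β A S)
    (x : Euc d) : IsCZKernelAt x (n + β) A (S x) :=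
  ⟨hS.1 x, hS.2 x⟩

end ADR

/-- multiscale approximation of `T_{S,μ}1(x)` by the flat integral over the
plane `L₀` at the scale of `ℓ = dist(x,E)`, with error controlled by `ℓ^{-β} Σ 2^{-kβ} α_k`.
The condition `d_B(σ,ν) ≤ t` is spelled out over `1`-Lipschitz functions supported in `B`. -/
theorem statement10 (n d : ℕ) (hn : 0 < n) (hnd : n < d) (β A C₀ c₁ Aadr : ℝ)
    (hβ : 0 < β) (hA : 0 < A) (hC₀ : 0 < C₀) (hc₁ : 0 < c₁) :
    ∃ C : ℝ, 0 < C ∧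
      ∀ μ : Measure (Euc d), IsADRWith n Aadr μ (msupport μ) →
      ∀ S : Euc d → Euc d → ℝ, IsCZKernel n β A S →
      ∀ x : Euc d, x ∉ msupport μ →
      ∀ ℓ : ℝ, ℓ = infDist x (msupport μ) →
      ∀ (L : ℕ → Set (Euc d)) (c α : ℕ → ℝ),
        (∀ k, IsNPlane n (L k)) →
        (∀ k, (L k ∩ closedBall x ((2 : ℝ) ^ k * ℓ)).Nonempty) →
        (∀ k, 0 ≤ c k ∧ c k ≤ C₀) →
        (∀ k, 0 ≤ α k ∧ α k ≤ 1) →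
        -- (i) d_{B(x, 2^{k+1}ℓ)}(μ, c_k ℋⁿ|_{L_k}) ≤ α_k (2^k ℓ)^{n+1}
        (∀ k, ∀ f : Euc d → ℝ, LipschitzWith 1 f →
          tsupport f ⊆ closedBall x ((2 : ℝ) ^ (k + 1) * ℓ) →
          |(∫ y, f y ∂μ) - c k * ∫ y in L k, f y ∂(μH[(n : ℝ)])|
            ≤ α k * ((2 : ℝ) ^ k * ℓ) ^ (n + 1)) →
        -- (ii) |c_{k+1} - c_k| ≤ α_{k+1}
        (∀ k, |c (k + 1) - c k| ≤ α (k + 1)) →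
        -- (iii) d_H(L_k ∩ B(x,2^{k+1}ℓ), L_{k+1} ∩ B(x,2^{k+1}ℓ)) ≤ α_{k+1} 2^{k+1} ℓ
        (∀ k, hausdorffDist (L k ∩ closedBall x ((2 : ℝ) ^ (k + 1) * ℓ))
            (L (k + 1) ∩ closedBall x ((2 : ℝ) ^ (k + 1) * ℓ))
            ≤ α (k + 1) * (2 : ℝ) ^ (k + 1) * ℓ) →
        -- (iv) dist(x, L₀) ≥ c₁ ℓ
        c₁ * ℓ ≤ infDist x (L 0) →
        |(∫ y, S x y ∂μ) - c 0 * ∫ y in L 0, S x y ∂(μH[(n : ℝ)])|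
          ≤ C * ℓ ^ (-β) * ∑' k : ℕ, (2 : ℝ) ^ (-(k : ℝ) * β) * α k := by
  obtain ⟨C, hC, hmain⟩ := statement10_general.{0} n β A C₀ c₁ hβ hA hC₀.le hc₁
  refine ⟨C, hC, ?_⟩
  rintro μ hμ S hS x hx ℓ rfl L c α hL hne hc hα happrox hc_succ hL_succ hdist
  choose W hWL hWn using hL
  obtain rfl : (fun k => (W k : Set (Euc d))) = L := funext hWL
  refine hmain (Euc d) μ x _ (S x) W c α (infDist_msupport_pos hμ.nonempty hx)
    (ae_infDist_msupport_le_dist μ x) (hμ.measure_closedBall_ne_top x) (hS.isCZKernelAt x)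
    ⟨fun _ => inferInstance, hWn, hne, hc, hα, fun k F hF => ?_, hc_succ, hL_succ⟩ hdist
  exact happrox k F hF.lipschitz (closure_minimal hF.support_subset isClosed_closedBall)
end
end
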